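/- The integral-reflection operators I_j (0 ≤ j ≤ n), the action of Ω, and the translations t_λ (λ ∈ P) on functions P → ℂ satisfy the defining relations of the double affine Hecke algebra at critical level: (i) (I_j − τ_j)∘(I_j + τ_j⁻¹) = 0 for every j ∈ {0,…,n}; (ii) for all 0 ≤ j ≠ k ≤ n, if the order m of s_{a_j}s_{a_k} in W is finite, then I_j∘I_k∘I_j∘⋯ = I_k∘I_j∘I_k∘⋯ with m factors on each side; (iii) for every u ∈ Ω (acting by (uf)(λ) := f(u⁻¹λ)), u∘I_j∘u⁻¹ = I_{u_j} and u∘t_λ∘u⁻¹ = t_{u′λ}, where u′ is the linear part of u; (iv) t_λ∘t_μ = t_{λ+μ}; (v) for every j ∈ {0,…,n} and ν ∈ P_ϑ, I_j∘t_ν = t_{s_j′ν}∘I_j + (τ_j − τ_j⁻¹)·G_{j,ν}, where s_j′ is the linear part of s_{a_j}, and G_{j,ν} := t_ν + t_{ν−α_j} + ⋯ + t_{s_j′ν+α_j} if ⟨ν,α_j∨⟩ > 0, G_{j,ν} := 0 if ⟨ν,α_j∨⟩ = 0, and G_{j,ν} := −(t_{ν+α_j} + t_{ν+2α_j} + ⋯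 + t_{s_j′ν}) if ⟨ν,α_j∨⟩ < 0. Consequently T_j ↦ I_j, T_u ↦ u, X^λ ↦ t_λ extends to a representation of the double affine Hecke algebra at critical level on functions P → ℂ. -/

import Mathlib

open scoped RealInnerProductSpace BigOperators Classical

noncomputable section

/-- Alternating composition `A ∘ B ∘ A ∘ ⋯` with `m` factors (starting with `A`). -/
def altComp {α : Type*} (A B : α → α) : ℕ → (α → α)
  | 0 => id
  | m + 1 => A ∘ altComp B A m

/-- The sign of a real number, as an integer (with `sgnZ 0 = 0`). -/
def sgnZ (x : ℝ) : ℤ := if 0 < x then 1 else if x < 0 then -1 else 0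

/-- The function `v(x) = (1-t²)∫₀ˣ dy/(1-2t cos y+t²)`. -/
def mvfun (t x : ℝ) : ℝ :=
  (1 - t ^ 2) * ∫ y in (0:ℝ)..x, 1 / (1 - 2 * t * Real.cos y + t ^ 2)

section AffineOps

variable {V : Type*} [NormedAddCommGroup V] [InnerProductSpace ℝ V]

/-- The coroot `α∨ = 2α/⟨α,α⟩`. -/
def coroot (α : V) : V := (2 / ⟪α, α⟫) • α

/-- The affine root `a = α∨ + r c` (encoded as the pair `(α, r)`), as an affine
function on `V`. -/
def aval (c : ℝ) (a : V × ℤ) (x : V) : ℝ := ⟪x, coroot a.1⟫ + a.2 * c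

/-- The affine reflection `s_a(x) = x - a(x) α` attached to `a = α∨ + r c`. -/
def sAff (c : ℝ) (a : V × ℤ) (x : V) : V := x - aval c a x • a.1

/-- `w` maps the affine root `a` to the affine root `b`, i.e. `(wa)(x) = a(w⁻¹x) = b(x)`. -/
def mapsRoot (c : ℝ) (w : Equiv.Perm V) (a b : V × ℤ) : Prop :=
  ∀ x : V, aval c a (w⁻¹ x) = aval c b x

/-- The linear part `w′` of an affine transformation `w`. -/
def linPart (w : Equiv.Perm V) (x : V) : V := w x - w 0

variable {R : Type*} [Field R]

/-- The difference-reflection operator `T̂_a`. -/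
def hatT (c : ℝ) (τ : V × ℤ → R) (a : V × ℤ) (f : V → R) (x : V) : R :=
  if 0 < aval c a x then τ a * f (sAff c a x)
  else if aval c a x = 0 then τ a * f x
  else (τ a)⁻¹ * f (sAff c a x) + (τ a - (τ a)⁻¹) * f x

/-- The discrete integral operator `J_a`. -/
def Jop (c : ℝ) (a : V × ℤ) (f : V → R) (x : V) : R :=
  if 0 < aval c a x then
    - ∑ k ∈ Finset.Icc (1 : ℤ) ⌊aval c a x⌋, f (x - k • a.1)
  else if aval c a x = 0 then 0
  else ∑ k ∈ Finset.Ico (0 : ℤ) (-⌊aval c a x⌋), f (x + k • a.1)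

/-- The integral-reflection operator `I_a = τ_a s_a + (τ_a - τ_a⁻¹) J_a`. -/
def Iop (c : ℝ) (τ : V × ℤ → R) (a : V × ℤ) (f : V → R) (x : V) : R :=
  τ a * f (sAff c a x) + (τ a - (τ a)⁻¹) * Jop c a f x

end AffineOps

/-- An irreducible reduced crystallographic root system spanning `V`, together with a
choice of positive roots, simple roots, and the highest short root. -/
structure RootSystemData (V : Type*) [NormedAddCommGroup V] [InnerProductSpace ℝ V] :
    Type _ where
  n : ℕ
  n_pos : 1 ≤ n
  rank_eq : Module.finrank ℝ V = n
  R0 : Finset V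
  ne_zero : ∀ α ∈ R0, α ≠ (0 : V)
  span_top : Submodule.span ℝ (R0 : Set V) = ⊤
  reduced : ∀ α ∈ R0, ∀ t : ℝ, t • α ∈ R0 → t = 1 ∨ t = -1
  crystallographic : ∀ α ∈ R0, ∀ β ∈ R0, ∃ k : ℤ, ⟪β, coroot α⟫ = (k : ℝ)
  reflect_mem : ∀ α ∈ R0, ∀ β ∈ R0, β - ⟪β, coroot α⟫ • α ∈ R0
  irreducible : ∀ S : Finset V, S ⊆ R0 →
      (∀ a ∈ S, ∀ b ∈ R0, b ∉ S → ⟪a, b⟫ = 0) → S = ∅ ∨ S = R0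
  pos : Finset V
  pos_subset : pos ⊆ R0
  pos_or_neg : ∀ α ∈ R0, α ∈ pos ∨ -α ∈ pos
  pos_not_both : ∀ α ∈ pos, -α ∉ pos
  pos_add : ∀ α ∈ pos, ∀ β ∈ pos, α + β ∈ R0 → α + β ∈ pos
  simpleRoot : Fin n → V
  simpleRoot_mem : ∀ j, simpleRoot j ∈ pos
  pos_natCombo : ∀ α ∈ pos, ∃ k : Fin n → ℕ, α = ∑ j, (k j : ℝ) • simpleRoot j
  hshort : V
  hshort_mem : hshort ∈ pos
  hshort_short : ∀ α ∈ R0, ‖hshort‖ ≤ ‖α‖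
  hshort_highest : ∀ α ∈ R0, ‖α‖ = ‖hshort‖ →
      ∃ k : Fin n → ℕ, hshort - α = ∑ j, (k j : ℝ) • simpleRoot j

namespace RootSystemData

variable {V : Type*} [NormedAddCommGroup V] [InnerProductSpace ℝ V]
variable (D : RootSystemData V)

/-- The weight lattice `P`. -/
def weightLattice : Set V :=
  {x : V | ∀ α ∈ D.R0, ∃ k : ℤ, ⟪x, coroot α⟫ = (k : ℝ)}

/-- The root lattice `Q`. -/
def rootLattice : Set V := (Submodule.span ℤ (D.R0 : Set V) : Set V)

/-- The coweight lattice `P∨`. -/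
def coweightLattice : Set V :=
  {x : V | ∀ α ∈ D.R0, ∃ k : ℤ, ⟪x, α⟫ = (k : ℝ)}

/-- The dominant cone. -/
def dominant : Set V := {x : V | ∀ α ∈ D.pos, 0 ≤ ⟪x, coroot α⟫}

/-- `ω` is a minuscule (dominant) weight. -/
def IsMinuscule (ω : V) : Prop :=
  ω ∈ D.weightLattice ∧ ω ∈ D.dominant ∧ ω ≠ 0 ∧
    ∀ α ∈ D.pos, ⟪ω, coroot α⟫ ≤ 1

/-- `ω` is the quasi-minuscule weight, i.e. the highest short root. -/
def IsQuasiMinuscule (ω : V) : Prop := ω = D.hshort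

/-- The saturated set `P_ϑ` containing the (quasi-)minuscule weights. -/
def Ptheta : Set V :=
  {ν : V | ν ∈ D.weightLattice ∧ ∀ α ∈ D.R0, α ≠ ν → |⟪ν, coroot α⟫| ≤ 1}

/-- Half sum of the positive roots. -/
def rhoHalf : V := (2⁻¹ : ℝ) • ∑ α ∈ D.pos, α

/-- Half sum of the positive coroots. -/
def rhoVee : V := (2⁻¹ : ℝ) • ∑ α ∈ D.pos, coroot α

/-- `(α, r)` encodes an affine root. -/
def IsAffRoot (a : V × ℤ) : Prop := a.1 ∈ D.R0

/-- `(α, r)` encodes a positive affine root. -/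
def IsAffPos (a : V × ℤ) : Prop :=
  a.1 ∈ D.R0 ∧ (1 ≤ a.2 ∨ (a.2 = 0 ∧ a.1 ∈ D.pos))

/-- `(α, r)` encodes a negative affine root. -/
def IsAffNeg (a : V × ℤ) : Prop := D.IsAffPos (-a.1, -a.2)

/-- The simple affine roots `a₀ = -ϑ∨ + c`, `a_j = α_j∨`. -/
def aSimple (j : Fin (D.n + 1)) : V × ℤ :=
  Fin.cons (α := fun _ => V × ℤ) (-D.hshort, (1 : ℤ))
    (fun i => (D.simpleRoot i, (0 : ℤ))) j

/-- The reflections generating the finite Weyl group `W₀`. -/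
def W0Gens : Set (Equiv.Perm V) :=
  {e | ∃ α ∈ D.R0, ∀ x, e x = x - ⟪x, coroot α⟫ • α}

/-- The finite Weyl group `W₀`. -/
def W0 : Subgroup (Equiv.Perm V) := Subgroup.closure D.W0Gens

variable (c : ℝ)

/-- The affine reflections generating the affine Weyl group `W_R`. -/
def AffGens : Set (Equiv.Perm V) :=
  {e | ∃ a : V × ℤ, D.IsAffRoot a ∧ ∀ x, e x = sAff c a x}

/-- The affine Weyl group `W_R`. -/
def WR : Subgroup (Equiv.Perm V) := Subgroup.closure (D.AffGens c)

/-- The translations `t_{cλ}`, `λ ∈ P`. -/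
def TransGens : Set (Equiv.Perm V) :=
  {e | ∃ lam ∈ D.weightLattice, ∀ x : V, e x = x + c • lam}

/-- The extended affine Weyl group `W = W₀ ⋉ t(cP)`. -/
def Wext : Subgroup (Equiv.Perm V) :=
  Subgroup.closure (D.AffGens c ∪ D.TransGens c)

/-- The set `R(w) = R⁺ ∩ w⁻¹(R⁻)`. -/
def RW (w : Equiv.Perm V) : Set (V × ℤ) :=
  {a | D.IsAffPos a ∧ ∃ b : V × ℤ, D.IsAffNeg b ∧ mapsRoot c w a b}

/-- The length `ℓ(w) = #R(w)`. -/
def len (w : Equiv.Perm V) : ℕ := (D.RW c w).ncard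

/-- The closed fundamental alcove `A_c`. -/
def alcove : Set V := {x | ∀ a : V × ℤ, D.IsAffPos a → 0 ≤ aval c a x}

/-- `wmin x` is the unique shortest element of the affine Weyl group mapping `x` into
the fundamental alcove. -/
def IsWmin (wmin : V → Equiv.Perm V) : Prop :=
  ∀ x : V, wmin x ∈ D.WR c ∧ (wmin x) x ∈ D.alcove c ∧
    ∀ w ∈ D.WR c, w x ∈ D.alcove c → D.len c (wmin x) < D.len c w ∨ w = wmin x

/-- One step in the Bruhat order: `w < w s_a` whenever `ℓ(w) < ℓ(w s_a)`. -/
def bruhatStep (w w' : Equiv.Perm V) : Prop :=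
  ∃ a : V × ℤ, D.IsAffPos a ∧ ∃ e : Equiv.Perm V,
    (∀ x, e x = sAff c a x) ∧ w' = w * e ∧ D.len c w < D.len c w'

/-- The Bruhat order on the affine Weyl group. -/
def bruhatLE (w w' : Equiv.Perm V) : Prop :=
  Relation.ReflTransGen (D.bruhatStep c) w w'

/-- The partial order on `V`: `x ≤ y` iff `x₊ = y₊` and `w_x ≤ w_y` (Bruhat). -/
def vle (wmin : V → Equiv.Perm V) (x y : V) : Prop :=
  (wmin x) x = (wmin y) y ∧ D.bruhatLE c (wmin x) (wmin y)

/-- The interval `[x, y]` for the order `vle`. -/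
def vInterval (wmin : V → Equiv.Perm V) (x y : V) : Set V :=
  {z : V | D.vle c wmin x z ∧ D.vle c wmin z y}

/-- The partial order `⪯` on the weight lattice:
`μ ⪯ λ` iff `λ - μ ∈ Q` and `Conv [μ₊, μ] ⊆ Conv [λ₊, λ]`. -/
def pleq (wmin : V → Equiv.Perm V) (μ lam : V) : Prop :=
  lam - μ ∈ D.rootLattice ∧
    convexHull ℝ (D.vInterval c wmin ((wmin μ) μ) μ)
      ⊆ convexHull ℝ (D.vInterval c wmin ((wmin lam) lam) lam)

section Ops

variable {R : Type*} [Field R]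

/-- `τ` is a multiplicity function: nonvanishing on affine roots, and invariant
under the (extended affine) Weyl group action on the affine roots. -/
def IsMultiplicity (τ : V × ℤ → R) : Prop :=
  (∀ a : V × ℤ, D.IsAffRoot a → τ a ≠ 0) ∧
    ∀ w ∈ D.Wext c, ∀ a b : V × ℤ, D.IsAffRoot a → D.IsAffRoot b →
      mapsRoot c w a b → τ a = τ b

/-- `τ_w = ∏_{a ∈ R(w)} τ_a`. -/
def tauw (τ : V × ℤ → R) (w : Equiv.Perm V) : R := ∏ᶠ a ∈ D.RW c w, τ a

/-- `τ₀`, the multiplicity of the affine simple root `a₀`. -/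
def tauZero (τ : V × ℤ → R) : R := τ (-D.hshort, (1 : ℤ))

/-- The operator `I_{j₁} ∘ ⋯ ∘ I_{jℓ}` attached to a word in the simple reflections. -/
def wordOp (τ : V × ℤ → R) (l : List (Fin (D.n + 1))) : (V → R) → V → R :=
  (l.map fun j => Iop c τ (D.aSimple j)).foldr (· ∘ ·) id

/-- `l` is a reduced word for `w`, i.e. `w = s_{j₁} ∘ ⋯ ∘ s_{jℓ}` with `ℓ = ℓ(w)`. -/
def IsReducedWord (w : Equiv.Perm V) (l : List (Fin (D.n + 1))) : Prop :=
  l.length = D.len c w ∧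
    ∀ x : V, w x = ((l.map fun j => sAff c (D.aSimple j)).foldr (· ∘ ·) id) x

/-- `e∨_τ(η) = ∏_{α ∈ R₀⁺} τ_{α∨}^{⟨η,α∨⟩}`. -/
def etau (τ : V × ℤ → R) (η : V) : R :=
  ∏ α ∈ D.pos, τ (α, (0 : ℤ)) ^ ⌊⟪η, coroot α⟫⌋

/-- `h∨_τ = τ₀² e∨_τ(ϑ)`. -/
def hvee (τ : V × ℤ → R) : R := D.tauZero τ ^ 2 * D.etau τ D.hshort

/-- `θ(μ) = #{b ∈ R(w_μ) : b(μ) = -2}`. -/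
def theta (wmin : V → Equiv.Perm V) (μ : V) : ℕ :=
  {b : V × ℤ | b ∈ D.RW c (wmin μ) ∧ aval c b μ = -2}.ncard

/-- The coefficient `c_{λ,η} = θ(λ-η) e∨_τ(η) (h∨_τ)^{-sign⟨λ,η∨⟩}`. -/
def ccoef (τ : V × ℤ → R) (wmin : V → Equiv.Perm V) (lam η : V) : R :=
  (D.theta c wmin (lam - η) : R) * D.etau τ η *
    D.hvee τ ^ (-sgnZ ⟪lam, coroot η⟫)

/-- The coefficient `a_{λ,ν} = τ_{w_{w_λ(λ-ν)}} τ_{w_{w_λ(λ-ν)} w_λ} τ_{w_λ}⁻¹`. -/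
def acoef (τ : V × ℤ → R) (wmin : V → Equiv.Perm V) (lam ν : V) : R :=
  D.tauw c τ (wmin ((wmin lam) (lam - ν))) *
    D.tauw c τ (wmin ((wmin lam) (lam - ν)) * wmin lam) *
    (D.tauw c τ (wmin lam))⁻¹

/-- The coefficient `b_{λ,ν}`. -/
def bcoef (τ : V × ℤ → R) (wmin : V → Equiv.Perm V) (lam ν : V) : R :=
  if (wmin (lam - ν)) (lam - ν) = (wmin lam) lam then
    D.tauw c τ (wmin ((wmin lam) (lam - ν))) ^ 2 *
      (if D.IsAffNeg (ν, ⌊(1 - ⟪lam, coroot ν⟫) / c⌋) then 1 else 0)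
  else D.ccoef c τ wmin ((wmin lam) lam) (linPart (wmin lam) ν)

/-- The intertwining operator `(𝒥f)(λ) = τ_{w_λ}⁻¹ (I_{w_λ} f)(λ₊)`, where `Iw` assigns
to each `w_λ` the composite of integral-reflection operators along a reduced word. -/
def Jcal (τ : V × ℤ → R) (wmin : V → Equiv.Perm V)
    (Iw : Equiv.Perm V → (V → R) → V → R) (f : V → R) (x : V) : R :=
  (D.tauw c τ (wmin x))⁻¹ * Iw (wmin x) f ((wmin x) x)

end Ops

/-- The Yang–Yang type Morse function `𝒱_μ`. -/
def morse (t : V → ℝ) (μ ξ : V) : ℝ :=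
  (c / 2) * ⟪ξ, ξ⟫ - 2 * Real.pi * ⟪D.rhoVee + μ, ξ⟫ +
    ∑ α ∈ D.pos, (2 / ⟪α, α⟫) * ∫ x in (0:ℝ)..(⟪ξ, α⟫), mvfun (t α) x

/-- The critical equation `cξ + ∑_{α>0} v_α(⟨ξ,α⟩) α∨ = 2π(ρ∨+μ)`. -/
def criticalEq (t : V → ℝ) (μ ξ : V) : Prop :=
  c • ξ + ∑ α ∈ D.pos, mvfun (t α) ⟪ξ, α⟫ • coroot α
    = (2 * Real.pi) • (D.rhoVee + μ)

/-- The Hessian bilinear form `H_{η,ζ}(ξ)`. -/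
def hessForm (t : V → ℝ) (ξ η ζ : V) : ℝ :=
  c * ⟪η, ζ⟫ + ∑ α ∈ D.R0,
    (1 - t α ^ 2) * ⟪η, α⟫ * ⟪ζ, α⟫ /
      (⟪α, α⟫ * (1 - 2 * t α * Real.cos ⟪ξ, α⟫ + t α ^ 2))

/-- `κ_± = (2/n) ∑_{α>0} (1-t_α²)/(1 ± |t_α|)²`; here `s = ±1`. -/
def kappaPM (t : V → ℝ) (s : ℝ) : ℝ :=
  (2 / (D.n : ℝ)) * ∑ α ∈ D.pos, (1 - t α ^ 2) / (1 + s * |t α|) ^ 2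

end RootSystemData

open RootSystemData in
/-- The operator `G_{j,ν}` appearing in the cross relation of the double affine Hecke
algebra at critical level (the terminating geometric series `(t_ν - t_{s_j′ν})/(1 - t_{-α_j})`). -/
def Gop {V : Type*} [NormedAddCommGroup V] [InnerProductSpace ℝ V]
    (D : RootSystemData V) (c : ℝ) (j : Fin (D.n + 1)) (ν : V) (f : V → ℂ) (x : V) : ℂ :=
  if 0 < ⌊⟪ν, coroot (D.aSimple j).1⟫⌋ then
    ∑ k ∈ Finset.Ico (0 : ℤ) ⌊⟪ν, coroot (D.aSimple j).1⟫⌋, f (x - ν + k • (D.aSimple j).1)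
  else if ⌊⟪ν, coroot (D.aSimple j).1⟫⌋ = 0 then 0
  else - ∑ k ∈ Finset.Icc (1 : ℤ) (-⌊⟪ν, coroot (D.aSimple j).1⟫⌋),
        f (x - ν - k • (D.aSimple j).1)

/-!
Where the affine function `a` takes integer values, `I_a` is the transpose of a Demazure–Lusztig
operator `T_a` on the fraction field of the group algebra of `V`: if `a x₀ = 0` and `f` is written
as `f x = S (e^(x - x₀))` with a linear functional `S`, then `(I_a f) x = S (T_a e^(x - x₀))`.
The quadratic and cross relations are thereby identities between operators on a field. Two affine
roots whose reflections generate a finite group vanish at a common point `x₀`, so the braid relation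
is one for Demazure–Lusztig operators in rank two: writing `T_a = τ_a + E_a`, the two alternating
words differ by an expression in `E_a`, `E_b` which is a multiple of the antisymmetrizer of the
dihedral group, and the latter is symmetric in the two reflections. The remaining relations express
that `I_a` is natural with respect to affine isometries.
-/

section AlternatingWords

/-- The alternating word `⋯ * y * x * y * x` with `n` factors in a monoid. It is indexed by
its last letter because transposition reverses the order of the factors of `altComp`. -/
def altProd {M : Type*} [Monoid M] (x y : M) : ℕ → M
  | 0 => 1
  | n + 1 => altProd y x n * x

variable {M N : Type*} [Monoid M] [Monoid N]

theorem map_altProd (φ : M →* N) (x y : M) (n : ℕ) :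
    φ (altProd x y n) = altProd (φ x) (φ y) n := by
  induction n generalizing x y with
  | zero => exact map_one φ
  | succ n ih => rw [altProd, map_mul, ih, altProd]

theorem altProd_mul_pow {x y : M} (hx : x * x = 1) (hy : y * y = 1) (n : ℕ) :
    altProd x y n * (x * y) ^ n = altProd y x n := by
  induction n generalizing x y with
  | zero => simp [altProd]
  | succ n ih =>
    have hshift : y * (x * y) ^ n = (y * x) ^ n * y :=
      (SemiconjBy.pow_right (mul_assoc y x y).symm n).eq
    calc altProd x y (n + 1) * (x * y) ^ (n + 1)
        = altProd y x n * (x * x) * (y * (x * y) ^ n) := by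
          simp only [altProd, pow_succ', mul_assoc]
      _ = altProd y x n * (y * x) ^ n * y := by rw [hx, mul_one, hshift, mul_assoc]
      _ = altProd y x (n + 1) := by rw [ih hy hx, altProd]

theorem altProd_comm_of_pow_eq_one {x y : M} (hx : x * x = 1) (hy : y * y = 1) {n : ℕ}
    (hxy : (x * y) ^ n = 1) : altProd x y n = altProd y x n := by
  rw [← altProd_mul_pow hx hy, hxy, mul_one]

end AlternatingWords

section HeckeGenerators

variable {F A : Type*} [Field F] [Ring A] [Algebra F A] {e₁ e₂ : A} {t₁ t₂ : F}

theorem smul_one_add_mul_self {e : A} {t : F} (ht : t ≠ 0) (h : e * e = -(t + t⁻¹) • e) :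
    (t • 1 + e) * (t • 1 + e) = (t - t⁻¹) • (t • 1 + e) + 1 := by
  simp only [mul_add, add_mul, smul_mul_assoc, mul_smul_comm, mul_one, one_mul, h]
  match_scalars <;> field_simp <;> ring

theorem altProd_two_comm_of_commute (h : e₂ * e₁ = e₁ * e₂) :
    altProd (t₁ • 1 + e₁) (t₂ • 1 + e₂) 2 = altProd (t₂ • 1 + e₂) (t₁ • 1 + e₁) 2 := by
  simp only [altProd, one_mul, mul_add, add_mul, smul_mul_assoc, mul_smul_comm, mul_one, h]
  module

theorem altProd_three_comm_of_klElement_eq {t : F} (ht : t ≠ 0)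
    (h₁ : e₁ * e₁ = -(t + t⁻¹) • e₁) (h₂ : e₂ * e₂ = -(t + t⁻¹) • e₂)
    (h : e₁ * e₂ * e₁ - e₁ = e₂ * e₁ * e₂ - e₂) :
    altProd (t • 1 + e₁) (t • 1 + e₂) 3 = altProd (t • 1 + e₂) (t • 1 + e₁) 3 := by
  rw [sub_eq_iff_eq_add] at h
  simp only [altProd, one_mul, mul_add, add_mul, smul_mul_assoc, mul_smul_comm, mul_one, smul_add,
    h₁, h₂, h]
  match_scalars <;> field_simp <;> ring

theorem altProd_four_comm_of_klElement_eq (ht₁ : t₁ ≠ 0) (ht₂ : t₂ ≠ 0)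
    (h₁ : e₁ * e₁ = -(t₁ + t₁⁻¹) • e₁) (h₂ : e₂ * e₂ = -(t₂ + t₂⁻¹) • e₂)
    (h : e₂ * e₁ * e₂ * e₁ - (t₁ / t₂ + t₂ / t₁) • (e₂ * e₁)
      = e₁ * e₂ * e₁ * e₂ - (t₁ / t₂ + t₂ / t₁) • (e₁ * e₂)) :
    altProd (t₁ • 1 + e₁) (t₂ • 1 + e₂) 4 = altProd (t₂ • 1 + e₂) (t₁ • 1 + e₁) 4 := by
  rw [sub_eq_iff_eq_add] at h
  have h₁' (x : A) : x * e₁ * e₁ = -(t₁ + t₁⁻¹) • (x * e₁) := by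
    rw [mul_assoc, h₁, mul_smul_comm]
  have h₂' (x : A) : x * e₂ * e₂ = -(t₂ + t₂⁻¹) • (x * e₂) := by
    rw [mul_assoc, h₂, mul_smul_comm]
  simp only [altProd, one_mul, mul_add, add_mul, smul_mul_assoc, mul_smul_comm, mul_one, smul_add,
    h₁, h₂, h₁', h₂', h]
  match_scalars <;> field_simp <;> ring

theorem altProd_six_comm_of_klElement_eq (ht₁ : t₁ ≠ 0) (ht₂ : t₂ ≠ 0)
    (h₁ : e₁ * e₁ = -(t₁ + t₁⁻¹) • e₁) (h₂ : e₂ * e₂ = -(t₂ + t₂⁻¹) • e₂)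
    (h : e₂ * e₁ * e₂ * e₁ * e₂ * e₁ - (2 * (t₁ / t₂ + t₂ / t₁)) • (e₂ * e₁ * e₂ * e₁)
        + ((t₁ / t₂ + t₂ / t₁) ^ 2 - 1) • (e₂ * e₁)
      = e₁ * e₂ * e₁ * e₂ * e₁ * e₂ - (2 * (t₁ / t₂ + t₂ / t₁)) • (e₁ * e₂ * e₁ * e₂)
        + ((t₁ / t₂ + t₂ / t₁) ^ 2 - 1) • (e₁ * e₂)) :
    altProd (t₁ • 1 + e₁) (t₂ • 1 + e₂) 6 = altProd (t₂ • 1 + e₂) (t₁ • 1 + e₁) 6 := by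
  rw [← eq_sub_iff_add_eq, sub_eq_iff_eq_add] at h
  have h₁' (x : A) : x * e₁ * e₁ = -(t₁ + t₁⁻¹) • (x * e₁) := by
    rw [mul_assoc, h₁, mul_smul_comm]
  have h₂' (x : A) : x * e₂ * e₂ = -(t₂ + t₂⁻¹) • (x * e₂) := by
    rw [mul_assoc, h₂, mul_smul_comm]
  simp only [altProd, one_mul, mul_add, add_mul, smul_mul_assoc, mul_smul_comm, mul_one, smul_add,
    h₁, h₂, h₁', h₂', h]
  match_scalars <;> field_simp <;> ring

end HeckeGenerators

section DemazureLusztig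

variable {K : Type*} [Field K]

/-- The coefficient `c(X) = (t X - t⁻¹) / (1 - X)` of the Demazure–Lusztig operator
`t + c(X) (1 - s)`. -/
def cFun (t X : K) : K := (t * X - t⁻¹) / (1 - X)

theorem cFun_inv {t X : K} (ht : t ≠ 0) (hX : X ≠ 0) (hX₁ : 1 - X ≠ 0) :
    cFun t X⁻¹ = -(t + t⁻¹) - cFun t X := by
  have hX₁' : X - 1 ≠ 0 := sub_ne_zero.2 (sub_ne_zero.1 hX₁).symm
  have hXinv : 1 - X⁻¹ ≠ 0 := by
    rw [← inv_mul_cancel₀ hX, ← mul_sub_one]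
    exact mul_ne_zero (inv_ne_zero hX) hX₁'
  rw [cFun, cFun, div_eq_iff hXinv]
  field_simp
  ring

theorem cFun_rankTwo_A {t X Y : K} (ht : t ≠ 0) (hX : 1 - X ≠ 0) (hY : 1 - Y ≠ 0)
    (hXY : 1 - X * Y ≠ 0) :
    cFun t X * cFun t Y + cFun t (X * Y) * (-(t + t⁻¹) - cFun t X) - 1
      = cFun t Y * cFun t (X * Y) := by
  simp only [cFun]
  field_simp
  ring

theorem cFun_rankTwo_B {t₁ t₂ X Y : K} (ht₁ : t₁ ≠ 0) (ht₂ : t₂ ≠ 0) (hX : 1 - X ≠ 0)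
    (hY : 1 - Y ≠ 0) (hXY : 1 - X * Y ≠ 0) (hXXY : 1 - X ^ 2 * Y ≠ 0) :
    cFun t₁ X * cFun t₂ Y + cFun t₁ (X * Y) * (-(t₂ + t₂⁻¹) - cFun t₂ Y)
        + cFun t₂ (X ^ 2 * Y) * (-(t₁ + t₁⁻¹) - cFun t₁ X) - (t₁ / t₂ + t₂ / t₁)
      = cFun t₁ (X * Y) * cFun t₂ (X ^ 2 * Y) := by
  simp only [cFun]
  field_simp
  ring

/-- The two relations among the coefficients attached to the positive roots of a root system
of type `G₂` which make its Kazhdan–Lusztig element a multiple of the antisymmetrizer. -/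
def TypeGRelations (κ₁ κ₂ r p₁ p₂ p₃ q₁ q₂ q₃ : K) : Prop :=
  p₁ * q₁ + p₂ * (-κ₂ - q₁) + q₂ * (-κ₁ - p₁) + q₃ * (-κ₁ - p₂) + p₃ * (-κ₂ - q₃) - 2 * r
      = p₃ * q₂ ∧
    (p₁ * q₁ + p₂ * (-κ₂ - q₁)) ^ 2 + (p₁ * q₁ + p₂ * (-κ₂ - q₁)) * (q₂ * (-κ₁ - p₁))
        + (q₂ * (-κ₁ - p₁)) ^ 2 + p₁ * q₁ * (q₂ * (-κ₁ - p₁))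
        + p₂ * q₃ * (-κ₁ - p₂) * (-κ₂ - q₁) + p₃ * q₂ * (-κ₁ - p₁) * (-κ₂ - q₂)
        - 2 * r * (p₁ * q₁ + p₂ * (-κ₂ - q₁) + q₂ * (-κ₁ - p₁)) + (r ^ 2 - 1)
      = p₂ * p₃ * q₂ * q₃

section TypeG

variable {t₁ t₂ X Y : K} (ht₁ : t₁ ≠ 0) (ht₂ : t₂ ≠ 0) (hX : 1 - X ≠ 0) (hY : 1 - Y ≠ 0)
  (hXY : 1 - X * Y ≠ 0) (hX₂Y : 1 - X ^ 2 * Y ≠ 0) (hX₃Y : 1 - X ^ 3 * Y ≠ 0)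
  (hX₃Y₂ : 1 - X ^ 3 * Y ^ 2 ≠ 0)
include ht₁ ht₂ hX hY hXY hX₂Y hX₃Y hX₃Y₂

theorem typeGRelations_cFun :
    TypeGRelations (t₁ + t₁⁻¹) (t₂ + t₂⁻¹) (t₁ / t₂ + t₂ / t₁)
      (cFun t₁ X) (cFun t₁ (X * Y)) (cFun t₁ (X ^ 2 * Y))
      (cFun t₂ Y) (cFun t₂ (X ^ 3 * Y)) (cFun t₂ (X ^ 3 * Y ^ 2)) := by
  simp only [TypeGRelations, cFun]
  constructor <;> field_simp <;> ring

theorem typeGRelations_cFun_swap :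
    TypeGRelations (t₂ + t₂⁻¹) (t₁ + t₁⁻¹) (t₁ / t₂ + t₂ / t₁)
      (cFun t₂ Y) (cFun t₂ (X ^ 3 * Y)) (cFun t₂ (X ^ 3 * Y ^ 2))
      (cFun t₁ X) (cFun t₁ (X * Y)) (cFun t₁ (X ^ 2 * Y)) := by
  simp only [TypeGRelations, cFun]
  -- `field_simp` orders the variables by first occurrence: here `Y` precedes `X`.
  rw [mul_comm] at hXY hX₂Y hX₃Y hX₃Y₂
  constructor <;> field_simp <;> ring

end TypeG

end DemazureLusztig

section KazhdanLusztig

variable {F K : Type*} [Field F] [Field K] [Algebra F K]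

/-- The operator `p (1 - s)` attached to a reflection `s` and a coefficient `p`. -/
def skewOp (s : K →ₐ[F] K) (p : K) : Module.End F K :=
  LinearMap.mulLeft F p * (1 - s.toLinearMap)

theorem skewOp_apply (s : K →ₐ[F] K) (p g : K) : skewOp s p g = p * (g - s g) := rfl

theorem skewOp_mul_self {s : K →ₐ[F] K} (hs : Function.Involutive s) {p : K} {κ : F}
    (hp : s p = -algebraMap F K κ - p) : skewOp s p * skewOp s p = -κ • skewOp s p := by
  ext g
  simp only [Module.End.mul_apply, skewOp_apply, map_mul, map_sub, hp, hs g, LinearMap.smul_apply,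
    map_neg, Algebra.smul_def (A := K)]
  ring

/-- The alternating sum over the words of the dihedral group of order `2 N` generated by
`s₁` and `s₂`. -/
def antisymmetrizer {A : Type*} [Ring A] (s₁ s₂ : A) (N : ℕ) : A :=
  1 + ∑ k ∈ Finset.Ico 1 N, (-1) ^ k * (altProd s₁ s₂ k + altProd s₂ s₁ k)
    + (-1) ^ N * altProd s₁ s₂ N

theorem antisymmetrizer_comm {A : Type*} [Ring A] {s₁ s₂ : A} {N : ℕ}
    (h : altProd s₁ s₂ N = altProd s₂ s₁ N) :
    antisymmetrizer s₁ s₂ N = antisymmetrizer s₂ s₁ N := by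
  simp only [antisymmetrizer, h, add_comm (altProd s₁ s₂ _)]

theorem antisymmetrizer_three {A : Type*} [Ring A] (x y : A) :
    antisymmetrizer x y 3 = 1 - x - y + y * x + x * y - x * y * x := by
  simp only [antisymmetrizer, altProd, Finset.sum_Ico_succ_top, Finset.Ico_self, Finset.sum_empty,
    Nat.one_le_ofNat, le_refl, one_mul]
  noncomm_ring

theorem antisymmetrizer_four {A : Type*} [Ring A] (x y : A) :
    antisymmetrizer x y 4
      = 1 - x - y + y * x + x * y - x * y * x - y * x * y + y * x * y * x := by
  simp only [antisymmetrizer, altProd, Finset.sum_Ico_succ_top, Finset.Ico_self, Finset.sum_empty,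
    Nat.one_le_ofNat, le_refl, one_mul]
  noncomm_ring

theorem antisymmetrizer_six {A : Type*} [Ring A] (x y : A) :
    antisymmetrizer x y 6
      = 1 - x - y + y * x + x * y - x * y * x - y * x * y + y * x * y * x + x * y * x * y
        - x * y * x * y * x - y * x * y * x * y + y * x * y * x * y * x := by
  simp only [antisymmetrizer, altProd, Finset.sum_Ico_succ_top, Finset.Ico_self, Finset.sum_empty,
    Nat.one_le_ofNat, le_refl, one_mul]
  noncomm_ring

/-- The action of two reflections on the coefficients `p₁`, `p₂`, `p₃` attached to the
positive roots `α₁`, `α₂`, `α₁ + α₂` of a root system of type `A₂`. -/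
structure IsTypeAAction (s₁ s₂ : K →ₐ[F] K) (κ : F) (p₁ p₂ p₃ : K) : Prop where
  involutive₁ : Function.Involutive s₁
  involutive₂ : Function.Involutive s₂
  map₁_p₁ : s₁ p₁ = -algebraMap F K κ - p₁
  map₁_p₂ : s₁ p₂ = p₃
  map₁_p₃ : s₁ p₃ = p₂
  map₂_p₁ : s₂ p₁ = p₃
  map₂_p₂ : s₂ p₂ = -algebraMap F K κ - p₂
  map₂_p₃ : s₂ p₃ = p₁

/-- The action of two reflections on the coefficients attached to the positive roots of a
root system of type `B₂`: `p₁`, `q₁` belong to the simple roots, `p₂ = s₂ p₁` and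
`q₂ = s₁ q₁`. -/
structure IsTypeBAction (s₁ s₂ : K →ₐ[F] K) (κ₁ κ₂ : F) (p₁ p₂ q₁ q₂ : K) : Prop where
  involutive₁ : Function.Involutive s₁
  involutive₂ : Function.Involutive s₂
  map₁_p₁ : s₁ p₁ = -algebraMap F K κ₁ - p₁
  map₁_p₂ : s₁ p₂ = p₂
  map₁_q₁ : s₁ q₁ = q₂
  map₁_q₂ : s₁ q₂ = q₁
  map₂_p₁ : s₂ p₁ = p₂
  map₂_p₂ : s₂ p₂ = p₁
  map₂_q₁ : s₂ q₁ = -algebraMap F K κ₂ - q₁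
  map₂_q₂ : s₂ q₂ = q₂

/-- The action of two reflections on the coefficients attached to the positive roots of a
root system of type `G₂`: `p₁`, `q₁` belong to the simple roots, `p₂ = s₂ p₁`,
`p₃ = s₁ p₂`, `q₂ = s₁ q₁` and `q₃ = s₂ q₂`. -/
structure IsTypeGAction (s₁ s₂ : K →ₐ[F] K) (κ₁ κ₂ : F) (p₁ p₂ p₃ q₁ q₂ q₃ : K) : Prop where
  involutive₁ : Function.Involutive s₁
  involutive₂ : Function.Involutive s₂
  map₁_p₁ : s₁ p₁ = -algebraMap F K κ₁ - p₁
  map₁_p₂ : s₁ p₂ = p₃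
  map₁_p₃ : s₁ p₃ = p₂
  map₁_q₁ : s₁ q₁ = q₂
  map₁_q₂ : s₁ q₂ = q₁
  map₁_q₃ : s₁ q₃ = q₃
  map₂_p₁ : s₂ p₁ = p₂
  map₂_p₂ : s₂ p₂ = p₁
  map₂_p₃ : s₂ p₃ = p₃
  map₂_q₁ : s₂ q₁ = -algebraMap F K κ₂ - q₁
  map₂_q₂ : s₂ q₂ = q₃
  map₂_q₃ : s₂ q₃ = q₂

variable {s₁ s₂ : K →ₐ[F] K} {κ κ₁ κ₂ r : F} {p₁ p₂ p₃ q₁ q₂ q₃ : K}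

theorem IsTypeAAction.symm (h : IsTypeAAction s₁ s₂ κ p₁ p₂ p₃) :
    IsTypeAAction s₂ s₁ κ p₂ p₁ p₃ := by
  cases h
  constructor <;> assumption

theorem IsTypeBAction.symm (h : IsTypeBAction s₁ s₂ κ₁ κ₂ p₁ p₂ q₁ q₂) :
    IsTypeBAction s₂ s₁ κ₂ κ₁ q₁ q₂ p₁ p₂ := by
  cases h
  constructor <;> assumption

theorem IsTypeGAction.symm (h : IsTypeGAction s₁ s₂ κ₁ κ₂ p₁ p₂ p₃ q₁ q₂ q₃) :
    IsTypeGAction s₂ s₁ κ₂ κ₁ q₁ q₂ q₃ p₁ p₂ p₃ := by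
  cases h
  constructor <;> assumption

theorem IsTypeAAction.klElement_eq (h : IsTypeAAction s₁ s₂ κ p₁ p₂ p₃)
    (hcoeff : p₁ * p₂ + p₃ * (-algebraMap F K κ - p₁) - 1 = p₂ * p₃) :
    skewOp s₁ p₁ * skewOp s₂ p₂ * skewOp s₁ p₁ - skewOp s₁ p₁
      = LinearMap.mulLeft F (p₁ * p₂ * p₃)
        * antisymmetrizer s₁.toLinearMap s₂.toLinearMap 3 := by
  obtain ⟨i₁, -, h₁₁, h₁₂, h₁₃, h₂₁, -, -⟩ := h
  -- In the expansion over the words in `s₁`, `s₂` only the coefficients of `1` and `s₁` have to be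
  -- compared: they agree by `hcoeff` and by its image under `s₁`.
  have hcoeff₁ := congrArg s₁ hcoeff
  simp only [map_add, map_mul, map_sub, map_one, map_neg, h₁₁, h₁₂, h₁₃, AlgHom.commutes]
    at hcoeff₁
  ext g
  simp only [antisymmetrizer_three, skewOp_apply, h₁₁, h₁₂, h₁₃, h₂₁, i₁ _,
    map_add, map_mul, map_sub, Module.End.mul_apply, Module.End.one_apply,
    LinearMap.sub_apply, LinearMap.add_apply, LinearMap.mulLeft_apply, AlgHom.toLinearMap_apply]
  linear_combination p₁ * hcoeff * g - p₁ * hcoeff₁ * s₁ g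

theorem IsTypeBAction.klElement_eq (h : IsTypeBAction s₁ s₂ κ₁ κ₂ p₁ p₂ q₁ q₂)
    (hcoeff : p₁ * q₁ + p₂ * (-algebraMap F K κ₂ - q₁) + q₂ * (-algebraMap F K κ₁ - p₁)
      - algebraMap F K r = p₂ * q₂) :
    skewOp s₁ p₁ * skewOp s₂ q₁ * skewOp s₁ p₁ * skewOp s₂ q₁
        - r • (skewOp s₁ p₁ * skewOp s₂ q₁)
      = LinearMap.mulLeft F (p₁ * p₂ * q₁ * q₂)
        * antisymmetrizer s₂.toLinearMap s₁.toLinearMap 4 := by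
  obtain ⟨i₁, i₂, h₁₁, h₁₂, h₁₃, h₁₄, h₂₁, -, h₂₃, h₂₄⟩ := h
  have hcoeff₁ := congrArg s₁ hcoeff
  simp only [map_add, map_mul, map_sub, map_neg, h₁₁, h₁₂, h₁₃, h₁₄, AlgHom.commutes] at hcoeff₁
  ext g
  simp only [antisymmetrizer_four, skewOp_apply, h₁₁, h₁₂, h₁₃, h₁₄, h₂₁, h₂₃, h₂₄, i₁ _,
    i₂ _, map_add, map_mul, map_sub, map_neg, AlgHom.commutes, Module.End.mul_apply,
    Module.End.one_apply, LinearMap.sub_apply, LinearMap.add_apply, LinearMap.mulLeft_apply,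
    AlgHom.toLinearMap_apply, LinearMap.smul_apply, Algebra.smul_def (A := K)]
  linear_combination p₁ * q₁ * hcoeff * (g - s₂ g) - p₁ * q₂ * hcoeff₁ * (s₁ g - s₁ (s₂ g))

theorem IsTypeGAction.klElement_eq (h : IsTypeGAction s₁ s₂ κ₁ κ₂ p₁ p₂ p₃ q₁ q₂ q₃)
    (hcoeff : TypeGRelations (algebraMap F K κ₁) (algebraMap F K κ₂) (algebraMap F K r)
      p₁ p₂ p₃ q₁ q₂ q₃) :
    skewOp s₁ p₁ * skewOp s₂ q₁ * skewOp s₁ p₁ * skewOp s₂ q₁ * skewOp s₁ p₁ * skewOp s₂ q₁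
        - (2 * r) • (skewOp s₁ p₁ * skewOp s₂ q₁ * skewOp s₁ p₁ * skewOp s₂ q₁)
        + (r ^ 2 - 1) • (skewOp s₁ p₁ * skewOp s₂ q₁)
      = LinearMap.mulLeft F (p₁ * p₂ * p₃ * q₁ * q₂ * q₃)
        * antisymmetrizer s₂.toLinearMap s₁.toLinearMap 6 := by
  obtain ⟨i₁, i₂, h₁₁, h₁₂, h₁₃, h₁₄, h₁₅, h₁₆, h₂₁, h₂₂, h₂₃, h₂₄, h₂₅, h₂₆⟩ := h
  obtain ⟨ha, hb⟩ := hcoeff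
  have ha₁ := congrArg s₁ ha
  have hb₁ := congrArg s₁ hb
  simp only [map_add, map_mul, map_sub, map_neg, map_pow, map_one, map_ofNat, h₁₁, h₁₂, h₁₃, h₁₄,
    h₁₅, h₁₆, AlgHom.commutes] at ha₁ hb₁
  ext g
  simp only [antisymmetrizer_six, skewOp_apply, h₁₁, h₁₂, h₁₃, h₁₄, h₁₅, h₁₆, h₂₁, h₂₂, h₂₃, h₂₄,
    h₂₅, h₂₆, i₁ _, i₂ _, map_add, map_mul, map_sub, map_neg, map_pow, map_one, map_ofNat,
    AlgHom.commutes, Module.End.mul_apply, Module.End.one_apply, LinearMap.sub_apply,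
    LinearMap.add_apply, LinearMap.mulLeft_apply, AlgHom.toLinearMap_apply, LinearMap.smul_apply,
    Algebra.smul_def (A := K)]
  linear_combination p₁ * q₁ * hb * (g - s₂ g) - p₁ * q₂ * hb₁ * (s₁ g - s₁ (s₂ g))
    + p₁ * q₁ * p₂ * q₃ * ha * (s₂ (s₁ g) - s₂ (s₁ (s₂ g)))
    - p₁ * q₂ * p₃ * q₃ * ha₁ * (s₁ (s₂ (s₁ g)) - s₁ (s₂ (s₁ (s₂ g))))

end KazhdanLusztig

section RankTwoBraid

variable {F K : Type*} [Field F] [Field K] [Algebra F K]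

/-- The Demazure–Lusztig operator `t s + (t - t⁻¹) (1 - X)⁻¹ (1 - s)`. -/
def demazureLusztig (s : K →ₐ[F] K) (t : F) (X : K) : Module.End F K :=
  t • s.toLinearMap + (t - t⁻¹) • skewOp s (1 - X)⁻¹

theorem demazureLusztig_apply (s : K →ₐ[F] K) (t : F) (X g : K) :
    demazureLusztig s t X g = t • s g + (t - t⁻¹) • ((g - s g) / (1 - X)) := by
  simp only [demazureLusztig, LinearMap.add_apply, LinearMap.smul_apply, skewOp_apply,
    AlgHom.toLinearMap_apply, div_eq_inv_mul]

theorem demazureLusztig_eq (s : K →ₐ[F] K) {t : F} (ht : t ≠ 0) {X : K} (hX : 1 - X ≠ 0) :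
    demazureLusztig s t X = t • 1 + skewOp s (cFun (algebraMap F K t) X) := by
  have ht' : algebraMap F K t ≠ 0 := by simpa using ht
  ext g
  simp only [demazureLusztig_apply, cFun, LinearMap.add_apply, LinearMap.smul_apply, skewOp_apply,
    Module.End.one_apply, Algebra.smul_def (A := K), map_sub, map_inv₀]
  field_simp
  ring

theorem demazureLusztig_mul (s : K →ₐ[F] K) (t : F) (X h g : K) :
    demazureLusztig s t X (h * g)
      = s h * demazureLusztig s t X g + (t - t⁻¹) • ((h - s h) / (1 - X) * g) := by
  simp only [demazureLusztig_apply, map_mul, Algebra.smul_def]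
  ring

theorem map_cFun (s : K →ₐ[F] K) (t : F) (X : K) :
    s (cFun (algebraMap F K t) X) = cFun (algebraMap F K t) (s X) := by
  simp only [cFun, map_div₀, map_sub, map_mul, map_inv₀, map_one, AlgHom.commutes]

theorem map_cFun_of_map_eq_inv {s : K →ₐ[F] K} {t : F} (ht : t ≠ 0) {X : K} (hX : X ≠ 0)
    (hX₁ : 1 - X ≠ 0) (hs : s X = X⁻¹) :
    s (cFun (algebraMap F K t) X)
      = -algebraMap F K (t + t⁻¹) - cFun (algebraMap F K t) X := by
  rw [map_cFun, hs, cFun_inv (by simpa using ht) hX hX₁, map_add, map_inv₀]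

theorem demazureLusztig_mul_self {s : K →ₐ[F] K} (hs : Function.Involutive s) {t : F}
    (ht : t ≠ 0) {X : K} (hX : X ≠ 0) (hX₁ : 1 - X ≠ 0) (hsX : s X = X⁻¹) :
    demazureLusztig s t X * demazureLusztig s t X = (t - t⁻¹) • demazureLusztig s t X + 1 := by
  rw [demazureLusztig_eq s ht hX₁]
  have := skewOp_mul_self hs (map_cFun_of_map_eq_inv ht hX hX₁ hsX)
  exact smul_one_add_mul_self (A := Module.End F K) ht this

/-- The pairs of (negated) Cartan integers `A`, `B` of a base of a root system of rank two,
together with the order `N` of the product of the simple reflections. -/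
inductive RankTwoType : ℕ → ℕ → ℕ → Prop
  | a₁a₁ : RankTwoType 0 0 2
  | a₂ : RankTwoType 1 1 3
  | b₂ : RankTwoType 1 2 4
  | c₂ : RankTwoType 2 1 4
  | g₂ : RankTwoType 1 3 6
  | g₂' : RankTwoType 3 1 6

theorem RankTwoType.exists_of_mul_lt_four {A B : ℕ} (hAB : A * B < 4) (h₀ : A = 0 ↔ B = 0) :
    ∃ N, RankTwoType A B N := by
  rcases Nat.eq_zero_or_pos A with hA | hA
  · obtain rfl := h₀.1 hA
    exact ⟨2, hA ▸ a₁a₁⟩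
  have hB : 0 < B := Nat.pos_of_ne_zero fun hB => hA.ne' (h₀.2 hB)
  have hA₃ : A ≤ 3 := by nlinarith
  have hB₃ : B ≤ 3 := by nlinarith
  interval_cases A <;> interval_cases B <;> first | omega | exact ⟨_, by constructor⟩

/-- Two reflections `s₁`, `s₂` of the field `K` and elements `X`, `Y`, which stand for the
exponentials of two simple roots `α`, `β` with `⟨α, β∨⟩ = -A` and `⟨β, α∨⟩ = -B`. -/
structure IsReflectionPair (s₁ s₂ : K →ₐ[F] K) (X Y : K) (A B : ℕ) : Prop where
  involutive₁ : Function.Involutive s₁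
  involutive₂ : Function.Involutive s₂
  ne_zero₁ : X ≠ 0
  ne_zero₂ : Y ≠ 0
  map₁_X : s₁ X = X⁻¹
  map₁_Y : s₁ Y = X ^ B * Y
  map₂_X : s₂ X = X * Y ^ A
  map₂_Y : s₂ Y = Y⁻¹
  monomial_ne_one : ∀ i j : ℕ, (i, j) ≠ 0 → X ^ i * Y ^ j ≠ 1

namespace IsReflectionPair

variable {s₁ s₂ : K →ₐ[F] K} {X Y : K} {A B N : ℕ} {t t₁ t₂ : F}

theorem symm (h : IsReflectionPair s₁ s₂ X Y A B) : IsReflectionPair s₂ s₁ Y X B A where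
  involutive₁ := h.involutive₂
  involutive₂ := h.involutive₁
  ne_zero₁ := h.ne_zero₂
  ne_zero₂ := h.ne_zero₁
  map₁_X := h.map₂_Y
  map₁_Y := by rw [h.map₂_X, mul_comm]
  map₂_X := by rw [h.map₁_Y, mul_comm]
  map₂_Y := h.map₁_X
  monomial_ne_one i j hij := by
    rw [mul_comm]
    exact h.monomial_ne_one j i fun hji => hij (by simp_all)

theorem one_sub_monomial_ne_zero (h : IsReflectionPair s₁ s₂ X Y A B) (i j : ℕ)
    (hij : (i, j) ≠ 0) : 1 - X ^ i * Y ^ j ≠ 0 :=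
  sub_ne_zero.2 (h.monomial_ne_one i j hij).symm

theorem one_sub_ne_zero₁ (h : IsReflectionPair s₁ s₂ X Y A B) : 1 - X ≠ 0 := by
  simpa using h.one_sub_monomial_ne_zero 1 0 (by simp)

theorem one_sub_ne_zero₂ (h : IsReflectionPair s₁ s₂ X Y A B) : 1 - Y ≠ 0 :=
  h.symm.one_sub_ne_zero₁

theorem map₁_cFun (h : IsReflectionPair s₁ s₂ X Y A B) (ht : t ≠ 0) :
    s₁ (cFun (algebraMap F K t) X)
      = -algebraMap F K (t + t⁻¹) - cFun (algebraMap F K t) X :=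
  map_cFun_of_map_eq_inv ht h.ne_zero₁ h.one_sub_ne_zero₁ h.map₁_X

theorem map₂_cFun (h : IsReflectionPair s₁ s₂ X Y A B) (ht : t ≠ 0) :
    s₂ (cFun (algebraMap F K t) Y)
      = -algebraMap F K (t + t⁻¹) - cFun (algebraMap F K t) Y :=
  h.symm.map₁_cFun ht

theorem isTypeAAction (h : IsReflectionPair s₁ s₂ X Y 1 1) (ht : t ≠ 0) :
    IsTypeAAction s₁ s₂ (t + t⁻¹) (cFun (algebraMap F K t) X) (cFun (algebraMap F K t) Y)
      (cFun (algebraMap F K t) (X * Y)) := by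
  have hX := h.ne_zero₁
  have hY := h.ne_zero₂
  constructor <;>
    first
    | exact h.involutive₁
    | exact h.involutive₂
    | exact h.map₁_cFun ht
    | exact h.map₂_cFun ht
    | (simp only [map_cFun, map_mul, h.map₁_X, h.map₁_Y, h.map₂_X, h.map₂_Y]
       try field_simp)

theorem isTypeBAction (h : IsReflectionPair s₁ s₂ X Y 1 2) (ht₁ : t₁ ≠ 0) (ht₂ : t₂ ≠ 0) :
    IsTypeBAction s₁ s₂ (t₁ + t₁⁻¹) (t₂ + t₂⁻¹)
      (cFun (algebraMap F K t₁) X) (cFun (algebraMap F K t₁) (X * Y))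
      (cFun (algebraMap F K t₂) Y) (cFun (algebraMap F K t₂) (X ^ 2 * Y)) := by
  have hX := h.ne_zero₁
  have hY := h.ne_zero₂
  constructor <;>
    first
    | exact h.involutive₁
    | exact h.involutive₂
    | exact h.map₁_cFun ht₁
    | exact h.map₂_cFun ht₂
    | (simp only [map_cFun, map_mul, map_pow, h.map₁_X, h.map₁_Y, h.map₂_X, h.map₂_Y]
       try field_simp)

theorem isTypeGAction (h : IsReflectionPair s₁ s₂ X Y 1 3) (ht₁ : t₁ ≠ 0) (ht₂ : t₂ ≠ 0) :
    IsTypeGAction s₁ s₂ (t₁ + t₁⁻¹) (t₂ + t₂⁻¹)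
      (cFun (algebraMap F K t₁) X) (cFun (algebraMap F K t₁) (X * Y))
      (cFun (algebraMap F K t₁) (X ^ 2 * Y))
      (cFun (algebraMap F K t₂) Y) (cFun (algebraMap F K t₂) (X ^ 3 * Y))
      (cFun (algebraMap F K t₂) (X ^ 3 * Y ^ 2)) := by
  have hX := h.ne_zero₁
  have hY := h.ne_zero₂
  constructor <;>
    first
    | exact h.involutive₁
    | exact h.involutive₂
    | exact h.map₁_cFun ht₁
    | exact h.map₂_cFun ht₂
    | (simp only [map_cFun, map_mul, map_pow, h.map₁_X, h.map₁_Y, h.map₂_X, h.map₂_Y]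
       try field_simp)

theorem skewOp_mul_self₁ (h : IsReflectionPair s₁ s₂ X Y A B) (ht : t ≠ 0) :
    skewOp s₁ (cFun (algebraMap F K t) X) * skewOp s₁ (cFun (algebraMap F K t) X)
      = -(t + t⁻¹) • skewOp s₁ (cFun (algebraMap F K t) X) :=
  skewOp_mul_self h.involutive₁ (h.map₁_cFun ht)

theorem skewOp_mul_self₂ (h : IsReflectionPair s₁ s₂ X Y A B) (ht : t ≠ 0) :
    skewOp s₂ (cFun (algebraMap F K t) Y) * skewOp s₂ (cFun (algebraMap F K t) Y)
      = -(t + t⁻¹) • skewOp s₂ (cFun (algebraMap F K t) Y) :=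
  h.symm.skewOp_mul_self₁ ht

theorem braid_a₁a₁ (h : IsReflectionPair s₁ s₂ X Y 0 0) (ht₁ : t₁ ≠ 0) (ht₂ : t₂ ≠ 0)
    (hs : altProd s₁.toLinearMap s₂.toLinearMap 2 = altProd s₂.toLinearMap s₁.toLinearMap 2) :
    altProd (demazureLusztig s₁ t₁ X) (demazureLusztig s₂ t₂ Y) 2
      = altProd (demazureLusztig s₂ t₂ Y) (demazureLusztig s₁ t₁ X) 2 := by
  have hcomm : skewOp s₂ (cFun (algebraMap F K t₂) Y) * skewOp s₁ (cFun (algebraMap F K t₁) X)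
      = skewOp s₁ (cFun (algebraMap F K t₁) X) * skewOp s₂ (cFun (algebraMap F K t₂) Y) := by
    ext g
    have hg : s₂ (s₁ g) = s₁ (s₂ g) := by simpa [altProd] using LinearMap.congr_fun hs g
    simp only [Module.End.mul_apply, skewOp_apply, map_mul, map_sub, map_cFun, h.map₁_Y, h.map₂_X,
      pow_zero, one_mul, mul_one, hg]
    ring
  have hbraid := altProd_two_comm_of_commute (A := Module.End F K) (t₁ := t₁) (t₂ := t₂) hcomm
  rw [demazureLusztig_eq s₁ ht₁ h.one_sub_ne_zero₁, demazureLusztig_eq s₂ ht₂ h.one_sub_ne_zero₂]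
  exact hbraid

theorem braid_a₂ (h : IsReflectionPair s₁ s₂ X Y 1 1) (ht : t ≠ 0)
    (hs : altProd s₁.toLinearMap s₂.toLinearMap 3 = altProd s₂.toLinearMap s₁.toLinearMap 3) :
    altProd (demazureLusztig s₁ t X) (demazureLusztig s₂ t Y) 3
      = altProd (demazureLusztig s₂ t Y) (demazureLusztig s₁ t X) 3 := by
  have ht' : algebraMap F K t ≠ 0 := by simpa using ht
  have hX := h.one_sub_ne_zero₁
  have hY := h.one_sub_ne_zero₂
  have hXY : 1 - X * Y ≠ 0 := by simpa using h.one_sub_monomial_ne_zero 1 1 (by simp)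
  rw [demazureLusztig_eq s₁ ht hX, demazureLusztig_eq s₂ ht hY]
  have hbraid := altProd_three_comm_of_klElement_eq (A := Module.End F K) ht (h.skewOp_mul_self₁ ht)
    (h.skewOp_mul_self₂ ht)
  refine hbraid ?_
  rw [(h.isTypeAAction ht).klElement_eq, (h.isTypeAAction ht).symm.klElement_eq,
    antisymmetrizer_comm hs, mul_comm (cFun _ X)]
  · have := cFun_rankTwo_A ht' hY hX (mul_comm X Y ▸ hXY)
    simpa [mul_comm Y X] using this
  · simpa using cFun_rankTwo_A ht' hX hY hXY

theorem braid_b₂ (h : IsReflectionPair s₁ s₂ X Y 1 2) (ht₁ : t₁ ≠ 0) (ht₂ : t₂ ≠ 0)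
    (hs : altProd s₁.toLinearMap s₂.toLinearMap 4 = altProd s₂.toLinearMap s₁.toLinearMap 4) :
    altProd (demazureLusztig s₁ t₁ X) (demazureLusztig s₂ t₂ Y) 4
      = altProd (demazureLusztig s₂ t₂ Y) (demazureLusztig s₁ t₁ X) 4 := by
  have hX := h.one_sub_ne_zero₁
  have hY := h.one_sub_ne_zero₂
  have hcoeff := cFun_rankTwo_B (t₁ := algebraMap F K t₁) (t₂ := algebraMap F K t₂)
    (by simpa using ht₁) (by simpa using ht₂) hX hY
    (by simpa using h.one_sub_monomial_ne_zero 1 1 (by simp))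
    (by simpa using h.one_sub_monomial_ne_zero 2 1 (by simp))
  rw [demazureLusztig_eq s₁ ht₁ hX, demazureLusztig_eq s₂ ht₂ hY]
  have hbraid := altProd_four_comm_of_klElement_eq (A := Module.End F K) ht₁ ht₂
    (h.skewOp_mul_self₁ ht₁) (h.skewOp_mul_self₂ ht₂)
  refine hbraid ?_
  rw [(h.isTypeBAction ht₁ ht₂).klElement_eq, (h.isTypeBAction ht₁ ht₂).symm.klElement_eq,
    antisymmetrizer_comm hs]
  · congr 2
    ring
  · simp only [map_add, map_inv₀, map_div₀]
    linear_combination hcoeff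
  · simp only [map_add, map_inv₀, map_div₀]
    exact hcoeff

theorem braid_g₂ (h : IsReflectionPair s₁ s₂ X Y 1 3) (ht₁ : t₁ ≠ 0) (ht₂ : t₂ ≠ 0)
    (hs : altProd s₁.toLinearMap s₂.toLinearMap 6 = altProd s₂.toLinearMap s₁.toLinearMap 6) :
    altProd (demazureLusztig s₁ t₁ X) (demazureLusztig s₂ t₂ Y) 6
      = altProd (demazureLusztig s₂ t₂ Y) (demazureLusztig s₁ t₁ X) 6 := by
  have ht₁' : algebraMap F K t₁ ≠ 0 := by simpa using ht₁
  have ht₂' : algebraMap F K t₂ ≠ 0 := by simpa using ht₂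
  have hX := h.one_sub_ne_zero₁
  have hY := h.one_sub_ne_zero₂
  have hXY : 1 - X * Y ≠ 0 := by simpa using h.one_sub_monomial_ne_zero 1 1 (by simp)
  have hX₂Y : 1 - X ^ 2 * Y ≠ 0 := by simpa using h.one_sub_monomial_ne_zero 2 1 (by simp)
  have hX₃Y : 1 - X ^ 3 * Y ≠ 0 := by simpa using h.one_sub_monomial_ne_zero 3 1 (by simp)
  have hX₃Y₂ := h.one_sub_monomial_ne_zero 3 2 (by simp)
  rw [demazureLusztig_eq s₁ ht₁ hX, demazureLusztig_eq s₂ ht₂ hY]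
  have hbraid := altProd_six_comm_of_klElement_eq (A := Module.End F K) ht₁ ht₂
    (h.skewOp_mul_self₁ ht₁) (h.skewOp_mul_self₂ ht₂)
  refine hbraid ?_
  rw [(h.isTypeGAction ht₁ ht₂).klElement_eq, (h.isTypeGAction ht₁ ht₂).symm.klElement_eq,
    antisymmetrizer_comm hs]
  · congr 2
    ring
  · simpa only [map_add, map_inv₀, map_div₀] using
      typeGRelations_cFun_swap ht₁' ht₂' hX hY hXY hX₂Y hX₃Y hX₃Y₂
  · simpa only [map_add, map_inv₀, map_div₀] using
      typeGRelations_cFun ht₁' ht₂' hX hY hXY hX₂Y hX₃Y hX₃Y₂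

theorem braid (h : IsReflectionPair s₁ s₂ X Y A B) (hN : RankTwoType A B N) (ht₁ : t₁ ≠ 0)
    (ht₂ : t₂ ≠ 0) (ht : A = 1 → B = 1 → t₁ = t₂)
    (hs : altProd s₁.toLinearMap s₂.toLinearMap N = altProd s₂.toLinearMap s₁.toLinearMap N) :
    altProd (demazureLusztig s₁ t₁ X) (demazureLusztig s₂ t₂ Y) N
      = altProd (demazureLusztig s₂ t₂ Y) (demazureLusztig s₁ t₁ X) N := by
  cases hN with
  | a₁a₁ => exact h.braid_a₁a₁ ht₁ ht₂ hs
  | a₂ =>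
    obtain rfl := ht rfl rfl
    exact h.braid_a₂ ht₁ hs
  | b₂ => exact h.braid_b₂ ht₁ ht₂ hs
  | c₂ => exact (h.symm.braid_b₂ ht₂ ht₁ hs.symm).symm
  | g₂ => exact h.braid_g₂ ht₁ ht₂ hs
  | g₂' => exact (h.symm.braid_g₂ ht₂ ht₁ hs.symm).symm

end IsReflectionPair

end RankTwoBraid

section SignedSum

variable {M N : Type*} [AddCommGroup M] [AddCommGroup N]

/-- The sum of `F` over the integer interval from `0` to `n`, counted negatively if `n < 0`:
the discrete analogue of `∫ x in 0..n, F x`. -/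
def signedSum (F : ℤ → M) (n : ℤ) : M :=
  ∑ k ∈ Finset.Ico 0 n, F k - ∑ k ∈ Finset.Ico n 0, F k

theorem map_signedSum {Φ : Type*} [FunLike Φ M N] [AddMonoidHomClass Φ M N] (φ : Φ) (F : ℤ → M)
    (n : ℤ) :
    φ (signedSum F n) = signedSum (fun k => φ (F k)) n := by
  simp only [signedSum, map_sub, map_sum]

theorem sum_Ico_add_one_sub (Φ : ℤ → M) {m n : ℤ} (h : m ≤ n) :
    ∑ k ∈ Finset.Ico m n, (Φ (k + 1) - Φ k) = Φ n - Φ m := by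
  induction n, h using Int.leInduction with
  | base => simp
  | succ n hmn ih =>
    rw [← Finset.insert_Ico_right_eq_Ico_add_one hmn,
      Finset.sum_insert Finset.right_notMem_Ico, ih, sub_add_sub_cancel]

theorem signedSum_add_one_sub (Φ : ℤ → M) (n : ℤ) :
    signedSum (fun k => Φ (k + 1) - Φ k) n = Φ n - Φ 0 := by
  rcases le_total 0 n with h | h
  · rw [signedSum, Finset.Ico_eq_empty_of_le h, Finset.sum_empty, sub_zero, sum_Ico_add_one_sub Φ h]
  · rw [signedSum, Finset.Ico_eq_empty_of_le h, Finset.sum_empty, zero_sub,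
      sum_Ico_add_one_sub Φ h, neg_sub]

theorem signedSum_eq_neg_sum_Icc (F : ℤ → M) {n : ℤ} (h : n ≤ 0) :
    signedSum F n = -∑ k ∈ Finset.Icc 1 (-n), F (-k) := by
  rw [signedSum, Finset.Ico_eq_empty_of_le h, Finset.sum_empty, zero_sub, neg_inj]
  refine Finset.sum_nbij' Neg.neg Neg.neg ?_ ?_ (fun k _ => neg_neg k) (fun k _ => neg_neg k) ?_
  · simp only [Finset.mem_Ico, Finset.mem_Icc]
    omega
  · simp only [Finset.mem_Ico, Finset.mem_Icc]
    omega
  · simp only [neg_neg, implies_true]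

theorem signedSum_eq_sum_Ico (F : ℤ → M) {n : ℤ} (h : 0 ≤ n) :
    signedSum F n = ∑ k ∈ Finset.Ico 0 n, F k := by
  rw [signedSum, Finset.Ico_eq_empty_of_le h, Finset.sum_empty, sub_zero]

end SignedSum

section Coroot

variable {V : Type*} [NormedAddCommGroup V] [InnerProductSpace ℝ V]

theorem inner_coroot_self {α : V} (hα : α ≠ 0) : ⟪α, coroot α⟫ = 2 := by
  rw [coroot, real_inner_smul_right, div_mul_cancel₀ _ (inner_self_ne_zero.2 hα)]

theorem coroot_coroot (α : V) : coroot (coroot α) = α := by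
  rcases eq_or_ne α 0 with rfl | hα
  · simp [coroot]
  have hα' : ⟪α, α⟫ ≠ 0 := inner_self_ne_zero.2 hα
  rw [coroot, coroot, real_inner_smul_left, real_inner_smul_right, smul_smul]
  convert one_smul ℝ α
  field_simp

theorem coroot_neg (α : V) : coroot (-α) = -coroot α := by
  rw [coroot, coroot, inner_neg_neg, smul_neg]

theorem map_coroot (L : V ≃ₗᵢ[ℝ] V) (α : V) : L (coroot α) = coroot (L α) := by
  rw [coroot, coroot, map_smul, L.inner_map_map]

theorem aval_add (c : ℝ) (a : V × ℤ) (x y : V) :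
    aval c a (x + y) = aval c a x + ⟪y, coroot a.1⟫ := by
  rw [aval, aval, inner_add_left]
  ring

theorem aval_add_zsmul_self (c : ℝ) {a : V × ℤ} (ha : a.1 ≠ 0) (x : V) (k : ℤ) :
    aval c a (x + k • a.1) = aval c a x + 2 * k := by
  rw [aval_add, ← Int.cast_smul_eq_zsmul ℝ, real_inner_smul_left, inner_coroot_self ha, mul_comm]

/-- The orthogonal reflection `x ↦ x - ⟨x, α∨⟩ α`. -/
def corootReflection (α : V) : V ≃ₗ[ℝ] V := ((ℝ ∙ α)ᗮ.reflection).toLinearEquiv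

theorem corootReflection_apply (α x : V) : corootReflection α x = x - ⟪x, coroot α⟫ • α := by
  rw [corootReflection, LinearIsometryEquiv.coe_toLinearEquiv,
    Submodule.reflection_orthogonal_apply, Submodule.reflection_singleton_apply, coroot,
    real_inner_smul_right, real_inner_comm, real_inner_self_eq_norm_sq]
  simp only [RCLike.ofReal_real_eq_id, id]
  module

theorem corootReflection_mul_self (α : V) : corootReflection α * corootReflection α = 1 := by
  ext x
  exact Submodule.reflection_reflection _ x

/-- The affine reflection `sAff c a` as an isometry. -/
def affineReflection (c : ℝ) (a : V × ℤ) : V ≃ᵃⁱ[ℝ] V :=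
  .mk' (sAff c a) (ℝ ∙ a.1)ᗮ.reflection 0 fun x => by
    rw [← LinearIsometryEquiv.coe_toLinearEquiv, ← corootReflection, vsub_eq_sub, vadd_eq_add,
      sub_zero, corootReflection_apply, sAff, sAff, aval, aval, inner_zero_left]
    module

end Coroot

section IntegralOperators

variable {V F : Type*} [NormedAddCommGroup V] [InnerProductSpace ℝ V] [Field F] {c : ℝ}

theorem Jop_eq_signedSum (f : V → F) {a : V × ℤ} {x : V} {p : ℤ} (hp : aval c a x = p) :
    Jop c a f x = signedSum (fun k => f (x + k • a.1)) (-p) := by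
  simp only [Jop, hp, Int.floor_intCast, Int.cast_pos, Int.cast_eq_zero]
  split_ifs with hpos hzero
  · rw [signedSum_eq_neg_sum_Icc _ (by omega), neg_neg]
    simp only [neg_smul, sub_eq_add_neg]
  · simp [hzero, signedSum]
  · rw [signedSum_eq_sum_Ico _ (by omega)]

theorem Gop_eq_signedSum (D : RootSystemData V) (c : ℝ) (j : Fin (D.n + 1)) (ν : V) (f : V → ℂ)
    (x : V) :
    Gop D c j ν f x = signedSum (fun k => f (x - ν + k • (D.aSimple j).1))
      ⌊⟪ν, coroot (D.aSimple j).1⟫⌋ := by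
  unfold Gop
  split_ifs with hpos hzero
  · rw [signedSum_eq_sum_Ico _ hpos.le]
  · simp [hzero, signedSum]
  · rw [signedSum_eq_neg_sum_Icc _ (by omega)]
    simp only [neg_smul, sub_eq_add_neg]

theorem Iop_eq_signedSum (τ : V × ℤ → F) (f : V → F) {a : V × ℤ} {x : V} {p : ℤ}
    (hp : aval c a x = p) :
    Iop c τ a f x = τ a * f (x + (-p) • a.1)
      + (τ a - (τ a)⁻¹) * signedSum (fun k => f (x + k • a.1)) (-p) := by
  rw [Iop, Jop_eq_signedSum f hp, sAff, hp, Int.cast_smul_eq_zsmul, neg_smul, sub_eq_add_neg]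

end IntegralOperators

section ExponentialField

open AddMonoidAlgebra

variable (F V : Type*) [Field F] [AddCommGroup V]

/-- The field of fractions of the group algebra `F[V]`, in which the formal exponentials `e^v`
live. -/
abbrev ExpField : Type _ := FractionRing F[V]

variable {V}

/-- The formal exponential `e^v`. -/
def fexp (v : V) : ExpField F V := algebraMap F[V] (ExpField F V) (single v 1)

theorem fexp_zero : fexp F (0 : V) = 1 := by
  rw [fexp, ← one_def, map_one]

theorem fexp_add (v w : V) : fexp F (v + w) = fexp F v * fexp F w := by
  rw [fexp, fexp, fexp, ← map_mul, single_mul_single, one_mul]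

theorem fexp_injective : Function.Injective (fexp F : V → ExpField F V) := fun _ _ h =>
  single_left_injective one_ne_zero (IsFractionRing.injective F[V] (ExpField F V) h)

theorem fexp_nsmul (n : ℕ) (v : V) : fexp F (n • v) = fexp F v ^ n := by
  induction n with
  | zero => rw [zero_smul, fexp_zero, pow_zero]
  | succ n ih => rw [succ_nsmul, fexp_add, ih, pow_succ]

theorem fexp_ne_zero (v : V) : fexp F v ≠ 0 :=
  left_ne_zero_of_mul_eq_one (b := fexp F (-v)) (by rw [← fexp_add, add_neg_cancel, fexp_zero])

theorem one_sub_fexp_ne_zero {v : V} (hv : v ≠ 0) : 1 - fexp F v ≠ 0 := by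
  rw [sub_ne_zero, ← fexp_zero F]
  exact (fexp_injective F).ne hv.symm

theorem exists_linearMap_fexp_sub (f : V → F) (x₀ : V) :
    ∃ S : ExpField F V →ₗ[F] F, ∀ x, S (fexp F (x - x₀)) = f x := by
  obtain ⟨g, hg⟩ := ((IsScalarTower.toAlgHom F F[V] (ExpField F V)).toLinearMap
    ).exists_leftInverse_of_injective
      (LinearMap.ker_eq_bot.2 (IsFractionRing.injective F[V] (ExpField F V)))
  refine ⟨Finsupp.linearCombination F (fun v => f (v + x₀)) ∘ₗ
    (coeffLinearEquiv F).toLinearMap ∘ₗ g, fun x => ?_⟩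
  have hx : g (fexp F (x - x₀)) = single (x - x₀) 1 := LinearMap.congr_fun hg _
  simp [hx]

variable [UniqueSums V]

theorem fexp_neg (v : V) : fexp F (-v) = (fexp F v)⁻¹ :=
  eq_inv_of_mul_eq_one_left (by rw [← fexp_add, neg_add_cancel, fexp_zero])

theorem signedSum_fexp (y : V) {v : V} (hv : v ≠ 0) (n : ℤ) :
    signedSum (fun k => fexp F (y + k • v)) n
      = (fexp F y - fexp F (y + n • v)) / (1 - fexp F v) := by
  have hv₁ := one_sub_fexp_ne_zero F hv
  have hstep (k : ℤ) : fexp F (y + k • v)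
      = -fexp F (y + (k + 1) • v) / (1 - fexp F v) - -fexp F (y + k • v) / (1 - fexp F v) := by
    rw [add_smul, one_smul, ← add_assoc, fexp_add F (y + k • v)]
    field_simp
    ring
  rw [funext hstep, signedSum_add_one_sub fun k => -fexp F (y + k • v) / (1 - fexp F v),
    zero_smul, add_zero]
  ring

variable {G : Type*} [Group G] [DistribMulAction G V]

/-- The automorphism `e^v ↦ e^(g v)` of the field of exponentials. -/
def fexpAut : G →* (ExpField F V ≃ₐ[F] ExpField F V) :=
  (IsFractionRing.fieldEquivOfAlgEquivHom F (ExpField F V)).comp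
    { toFun g := domCongr F F (DistribMulAction.toAddEquiv V g)
      map_one' := by ext; simp
      map_mul' g h := by ext; simp [mul_smul] }

theorem fexpAut_fexp (g : G) (v : V) : fexpAut F g (fexp F v) = fexp F (g • v) := by
  simp [fexpAut, fexp]

end ExponentialField

instance uniqueSums_of_module_real {V : Type*} [AddCommGroup V] [Module ℝ V] : UniqueSums V :=
  letI : Module ℚ V := Module.compHom V (algebraMap ℚ ℝ)
  inferInstance

section DemazureLusztigRepresentation

variable {V F : Type*} [NormedAddCommGroup V] [InnerProductSpace ℝ V] [Field F]
  {c : ℝ} {τ : V × ℤ → F} {a b : V × ℤ} {f : V → F} {P : Set V} {x₀ : V}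
  {S : ExpField F V →ₗ[F] F}

/-- The action `e^v ↦ e^(s_α v)` of the reflection in `α` on the field of exponentials. -/
def reflectionAut (F : Type*) [Field F] (α : V) : ExpField F V ≃ₐ[F] ExpField F V :=
  fexpAut F (corootReflection α)

theorem reflectionAut_fexp (α v : V) :
    reflectionAut F α (fexp F v) = fexp F (v - ⟪v, coroot α⟫ • α) := by
  rw [reflectionAut, fexpAut_fexp, ← corootReflection_apply]
  rfl

theorem reflectionAut_mul_self (α : V) : reflectionAut F α * reflectionAut F α = 1 := by
  rw [reflectionAut, ← map_mul, corootReflection_mul_self, map_one]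

theorem reflectionAut_involutive (α : V) : Function.Involutive (reflectionAut F α) :=
  AlgEquiv.congr_fun (reflectionAut_mul_self α)

theorem reflectionAut_fexp_self {α : V} (hα : α ≠ 0) :
    reflectionAut F α (fexp F α) = (fexp F α)⁻¹ := by
  rw [reflectionAut_fexp, inner_coroot_self hα, ← fexp_neg]
  congr 1
  module

/-- The Demazure–Lusztig operator of the root `α` on the field of exponentials. -/
def rootOp (t : F) (α : V) : Module.End F (ExpField F V) :=
  demazureLusztig (reflectionAut F α : ExpField F V →ₐ[F] ExpField F V) t (fexp F α)

theorem rootOp_mul_self {t : F} (ht : t ≠ 0) {α : V} (hα : α ≠ 0) :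
    rootOp t α * rootOp t α = (t - t⁻¹) • rootOp t α + 1 :=
  demazureLusztig_mul_self (reflectionAut_involutive α) ht (fexp_ne_zero F α)
    (one_sub_fexp_ne_zero F hα) (reflectionAut_fexp_self hα)

theorem rootOp_fexp (t : F) {α y : V} (hα : α ≠ 0) {p : ℤ} (hp : ⟪y, coroot α⟫ = p) :
    rootOp t α (fexp F y) = t • fexp F (y + (-p) • α)
      + (t - t⁻¹) • signedSum (fun k => fexp F (y + k • α)) (-p) := by
  have hs : reflectionAut F α (fexp F y) = fexp F (y + (-p) • α) := by
    rw [reflectionAut_fexp, hp, Int.cast_smul_eq_zsmul, neg_smul, sub_eq_add_neg]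
  rw [signedSum_fexp F y hα, rootOp, demazureLusztig_apply, AlgEquiv.coe_toAlgHom, hs]

theorem rootOp_fexp_sub (t : F) {α ν : V} (hα : α ≠ 0) {n : ℤ} (hn : ⟪ν, coroot α⟫ = n) (y : V) :
    fexp F (-ν) * rootOp t α (fexp F y)
      = rootOp t α (fexp F (y - (ν - n • α)))
        + (t - t⁻¹) • signedSum (fun k => fexp F (y - ν + k • α)) n := by
  have hs : reflectionAut F α (fexp F (-(ν - n • α))) = fexp F (-ν) := by
    rw [reflectionAut_fexp, inner_neg_left, inner_sub_left, ← Int.cast_smul_eq_zsmul ℝ,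
      real_inner_smul_left, inner_coroot_self hα, hn]
    congr 1
    module
  have hy : fexp F (y - (ν - n • α)) = fexp F (-(ν - n • α)) * fexp F y := by
    rw [← fexp_add]
    congr 1
    abel
  have hsum : y - ν + n • α = -(ν - n • α) + y := by abel
  rw [hy, signedSum_fexp F _ hα, hsum, sub_eq_neg_add y ν, fexp_add F _ y, fexp_add F _ y, rootOp,
    demazureLusztig_mul, AlgEquiv.coe_toAlgHom, hs, add_assoc, ← smul_add]
  have hzero (u v w : ExpField F V) :
      (u - v) / (1 - fexp F α) * w + (v * w - u * w) / (1 - fexp F α) = 0 := by ring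
  rw [hzero, smul_zero, add_zero]

/-- The set `P` consists of points at which the affine root `a` takes integer values, and is
stable under translation by the gradient of `a`. -/
def IsIntegralOn (c : ℝ) (a : V × ℤ) (P : Set V) : Prop :=
  ∀ x ∈ P, (∃ p : ℤ, aval c a x = p) ∧ ∀ k : ℤ, x + k • a.1 ∈ P

/-- On `P`, the function `f` is given by the linear functional `S` on the field of exponentials
with origin `x₀`. -/
def Represents (P : Set V) (x₀ : V) (f : V → F) (S : ExpField F V →ₗ[F] F) : Prop :=
  ∀ x ∈ P, f x = S (fexp F (x - x₀))

theorem Represents.iop (hP : IsIntegralOn c a P) (ha : a.1 ≠ 0) (hx₀ : aval c a x₀ = 0)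
    (hf : Represents P x₀ f S) : Represents P x₀ (Iop c τ a f) (S ∘ₗ rootOp (τ a) a.1) := by
  intro x hx
  obtain ⟨⟨p, hp⟩, hshift⟩ := hP x hx
  have hy : ⟪x - x₀, coroot a.1⟫ = p := by
    rw [← hp, ← add_sub_cancel x₀ x, aval_add, hx₀, zero_add, add_sub_cancel]
  have hfk (k : ℤ) : f (x + k • a.1) = S (fexp F (x - x₀ + k • a.1)) := by
    rw [hf _ (hshift k), add_sub_right_comm]
  simp only [Iop_eq_signedSum τ f hp, LinearMap.comp_apply, rootOp_fexp _ ha hy, map_add, map_smul,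
    map_signedSum, smul_eq_mul, hfk]

theorem Represents.altComp_iop (hPa : IsIntegralOn c a P) (hPb : IsIntegralOn c b P)
    (ha : a.1 ≠ 0) (hb : b.1 ≠ 0) (hx₀a : aval c a x₀ = 0) (hx₀b : aval c b x₀ = 0)
    (hf : Represents P x₀ f S) (m : ℕ) :
    Represents P x₀ (altComp (Iop c τ a) (Iop c τ b) m f)
      (S ∘ₗ altProd (rootOp (τ a) a.1) (rootOp (τ b) b.1) m) := by
  induction m generalizing a b with
  | zero => exact hf
  | succ m ih => exact (ih hPb hPa hb ha hx₀b hx₀a).iop hPa ha hx₀a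

theorem isIntegralOn_setOf_aval (ha : a.1 ≠ 0) :
    IsIntegralOn c a {x | ∃ p : ℤ, aval c a x = p} := by
  rintro x ⟨p, hp⟩
  exact ⟨⟨p, hp⟩, fun k => ⟨p + 2 * k, by rw [aval_add_zsmul_self c ha, hp]; push_cast; rfl⟩⟩

theorem exists_aval_eq_zero (c : ℝ) (ha : a.1 ≠ 0) : ∃ x₀, aval c a x₀ = 0 :=
  ⟨-(a.2 * c / 2) • a.1, by rw [aval, real_inner_smul_left, inner_coroot_self ha]; ring⟩

theorem Iop_quadratic (hτ : τ a ≠ 0) (ha : a.1 ≠ 0) (f : V → F) {x : V} {p : ℤ}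
    (hp : aval c a x = p) :
    Iop c τ a (fun y => Iop c τ a f y + (τ a)⁻¹ * f y) x
      = τ a * (Iop c τ a f x + (τ a)⁻¹ * f x) := by
  obtain ⟨x₀, hx₀⟩ := exists_aval_eq_zero c ha
  have hP := isIntegralOn_setOf_aval (c := c) ha
  obtain ⟨S, hS⟩ := exists_linearMap_fexp_sub F f x₀
  have hIf := Represents.iop (τ := τ) hP ha hx₀ fun y _ => (hS y).symm
  have hg : Represents {x | ∃ p : ℤ, aval c a x = p} x₀ (fun y => Iop c τ a f y + (τ a)⁻¹ * f y)
      (S ∘ₗ rootOp (τ a) a.1 + (τ a)⁻¹ • S) := fun y hy => by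
    simp only [hIf y hy, ← hS y, LinearMap.add_apply, LinearMap.smul_apply, smul_eq_mul]
  have hT := LinearMap.congr_fun (rootOp_mul_self hτ ha) (fexp F (x - x₀))
  rw [Module.End.mul_apply] at hT
  rw [hg.iop hP ha hx₀ x ⟨p, hp⟩, hIf x ⟨p, hp⟩, ← hS x]
  simp only [LinearMap.comp_apply, LinearMap.add_apply, LinearMap.smul_apply, hT, map_add, map_smul,
    smul_eq_mul, Module.End.one_apply]
  field_simp
  ring

theorem Iop_translate (τ : V × ℤ → F) (ha : a.1 ≠ 0) (f : V → F) {x ν : V} {p n : ℤ}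
    (hp : aval c a x = p) (hn : ⟪ν, coroot a.1⟫ = n) :
    Iop c τ a (fun y => f (y - ν)) x = Iop c τ a f (x - (ν - n • a.1))
      + (τ a - (τ a)⁻¹) * signedSum (fun k => f (x - ν + k • a.1)) n := by
  obtain ⟨x₀, hx₀⟩ := exists_aval_eq_zero c ha
  obtain ⟨S, hS⟩ := exists_linearMap_fexp_sub F f x₀
  have hP := isIntegralOn_setOf_aval (c := c) ha
  have hfν (y : V) : f (y - ν) = (S ∘ₗ LinearMap.mulLeft F (fexp F (-ν))) (fexp F (y - x₀)) := by
    rw [← hS, LinearMap.comp_apply, LinearMap.mulLeft_apply, ← fexp_add]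
    congr 2
    abel
  have hx : aval c a (x - (ν - n • a.1)) = (p + n : ℤ) := by
    rw [sub_sub_eq_add_sub, sub_eq_add_neg, add_right_comm, aval_add_zsmul_self c ha, aval_add,
      inner_neg_left, hp, hn]
    push_cast
    ring
  have hshift (k : ℤ) : f (x - ν + k • a.1) = S (fexp F (x - x₀ - ν + k • a.1)) := by
    rw [← hS, sub_right_comm, add_sub_right_comm]
  rw [Represents.iop hP ha hx₀ (fun y _ => hfν y) x ⟨p, hp⟩,
    Represents.iop hP ha hx₀ (fun y _ => (hS y).symm) _ ⟨p + n, hx⟩]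
  simp only [LinearMap.comp_apply, LinearMap.mulLeft_apply, rootOp_fexp_sub _ ha hn, map_add,
    map_smul, map_signedSum, smul_eq_mul, sub_right_comm _ _ x₀, hshift]

end DemazureLusztigRepresentation

section RankTwo

theorem RankTwoType.mul_lt_four {A B N : ℕ} (hN : RankTwoType A B N) : A * B < 4 := by
  cases hN <;> norm_num

theorem RankTwoType.pow_eq_one_of_quadratic {R : Type*} [Ring R] {ρ : R} {A B N : ℕ}
    (hN : RankTwoType A B N) (hρ : (ρ ^ 2 - ((A * B : ℕ) - 2 : R) * ρ + 1) * (ρ - 1) = 0)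
    (h₀ : A = 0 → ρ ^ 2 = 1) : ρ ^ N = 1 := by
  have hdvd (σ : R) : σ * ((ρ ^ 2 - ((A * B : ℕ) - 2 : R) * ρ + 1) * (ρ - 1)) = 0 := by
    rw [hρ, mul_zero]
  rw [← sub_eq_zero]
  cases hN with
  | a₁a₁ => rw [h₀ rfl, sub_self]
  | a₂ => exact Eq.trans (by norm_num; noncomm_ring) (hdvd 1)
  | b₂ | c₂ => exact Eq.trans (by norm_num; noncomm_ring) (hdvd (ρ + 1))
  | g₂ | g₂' =>
    exact Eq.trans (by norm_num; noncomm_ring) (hdvd (ρ ^ 3 + 2 * ρ ^ 2 + 2 * ρ + 1))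

theorem RankTwoType.orderOf_eq {R : Type*} [Ring R] [IsAddTorsionFree R] {ρ : R} {A B N : ℕ}
    (hN : RankTwoType A B N) (hρ : (ρ ^ 2 - ((A * B : ℕ) - 2 : R) * ρ + 1) * (ρ - 1) = 0)
    (h₀ : A = 0 → ρ ^ 2 = 1) (h₁ : ρ ≠ 1) : orderOf ρ = N := by
  have hpow := hN.pow_eq_one_of_quadratic hρ h₀
  have hsq (hAB : A * B ≠ 0) : ρ ^ 2 ≠ 1 := fun h => by
    refine h₁ (sub_eq_zero.1 ((smul_eq_zero_iff_right hAB).1 ?_))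
    calc (A * B) • (ρ - 1)
        = (ρ ^ 2 - ((A * B : ℕ) - 2 : R) * ρ + 1) * (ρ - 1)
            - (ρ - ((A * B : ℕ) - 1 : R)) * (ρ ^ 2 - 1) := by
          rw [nsmul_eq_mul]
          generalize ((A * B : ℕ) : R) = k
          noncomm_ring
      _ = 0 := by rw [hρ, h, sub_self, mul_zero, sub_zero]
  cases hN with
  | a₁a₁ => exact orderOf_eq_prime hpow h₁
  | a₂ => exact orderOf_eq_prime hpow h₁
  | b₂ | c₂ => exact orderOf_eq_prime_pow (p := 2) (n := 1) (hsq (by norm_num)) hpow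
  | g₂ | g₂' =>
    have hcube : ρ ^ 3 ≠ 1 := fun h => by
      refine h₁ (sub_eq_zero.1 ((smul_eq_zero_iff_right (two_ne_zero (α := ℕ))).1 ?_))
      have hρ' : (ρ ^ 2 - ρ + 1) * (ρ - 1) = 0 := Eq.trans (by norm_num) hρ
      calc 2 • (ρ - 1)
          = -ρ ^ 2 * ((ρ ^ 2 - ρ + 1) * (ρ - 1)) + (ρ ^ 2 - 2 • ρ + 2 • 1) * (ρ ^ 3 - 1) := by
            noncomm_ring
        _ = 0 := by rw [hρ', h, sub_self, mul_zero, mul_zero, add_zero]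
    refine orderOf_eq_of_pow_and_pow_div_prime (by norm_num) hpow fun p hp hdvd => ?_
    obtain rfl | rfl : p = 2 ∨ p = 3 := by
      have := Nat.le_of_dvd (by norm_num) hdvd
      interval_cases p <;> first | omega | exact absurd hp (by norm_num)
    · exact hcube
    · exact hsq (by norm_num)

end RankTwo

section CartanPair

variable {V : Type*} [NormedAddCommGroup V] [InnerProductSpace ℝ V] {α β : V} {A B N : ℕ}

/-- The pair `α`, `β` has Cartan integers `⟨α, β∨⟩ = -A` and `⟨β, α∨⟩ = -B`. -/
structure IsCartanPair (α β : V) (A B : ℕ) : Prop where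
  ne_zero₁ : α ≠ 0
  ne_zero₂ : β ≠ 0
  inner₁₂ : ⟪α, coroot β⟫ = -A
  inner₂₁ : ⟪β, coroot α⟫ = -B

namespace IsCartanPair

theorem symm (h : IsCartanPair α β A B) : IsCartanPair β α B A :=
  ⟨h.ne_zero₂, h.ne_zero₁, h.inner₂₁, h.inner₁₂⟩

theorem two_mul_inner (h : IsCartanPair α β A B) : 2 * ⟪α, β⟫ = -A * ⟪β, β⟫ := by
  have hβ : ⟪β, β⟫ ≠ 0 := inner_self_ne_zero.2 h.ne_zero₂
  rw [← h.inner₁₂, coroot, real_inner_smul_right]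
  field_simp

theorem inner_self_mul_eq (h : IsCartanPair α β A B) : A * ⟪β, β⟫ = B * ⟪α, α⟫ := by
  linear_combination h.two_mul_inner - h.symm.two_mul_inner + 2 * real_inner_comm α β

theorem eq_zero_iff (h : IsCartanPair α β A B) : A = 0 ↔ B = 0 := by
  have hα : ⟪α, α⟫ ≠ 0 := inner_self_ne_zero.2 h.ne_zero₁
  have hβ : ⟪β, β⟫ ≠ 0 := inner_self_ne_zero.2 h.ne_zero₂
  rw [← Nat.cast_eq_zero (R := ℝ), ← Nat.cast_eq_zero (R := ℝ), ← mul_eq_zero_iff_right hβ,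
    h.inner_self_mul_eq, mul_eq_zero_iff_right hα]

theorem mul_lt_four (h : IsCartanPair α β A B) (hdep : ∀ t : ℝ, β ≠ t • α) : A * B < 4 := by
  have hβ : 0 < ⟪β, β⟫ := real_inner_self_pos.2 h.ne_zero₂
  have hv : (2 : ℝ) • β + (B : ℝ) • α ≠ 0 := fun hv => hdep (-(B / 2)) (by
    rw [← eq_sub_iff_add_eq, zero_sub] at hv
    rw [← inv_smul_smul₀ (two_ne_zero (α := ℝ)) β, hv]
    module)
  have hnorm : ⟪(2 : ℝ) • β + (B : ℝ) • α, (2 : ℝ) • β + (B : ℝ) • α⟫ = (4 - A * B) * ⟪β, β⟫ := by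
    simp only [inner_add_left, inner_add_right, real_inner_smul_left, real_inner_smul_right]
    linear_combination (B : ℝ) * h.two_mul_inner + B * h.symm.two_mul_inner
  have hpos := real_inner_self_pos.2 hv
  rw [hnorm] at hpos
  have := pos_of_mul_pos_left hpos hβ.le
  exact_mod_cast sub_pos.1 this

theorem eq_zero_of_smul_add_smul_eq_zero (h : IsCartanPair α β A B) (hAB : A * B < 4) {i j : ℝ}
    (hij : i • α + j • β = 0) : i = 0 := by
  have hα : ⟪i • α + j • β, coroot α⟫ = 0 := by rw [hij, inner_zero_left]
  have hβ : ⟪i • α + j • β, coroot β⟫ = 0 := by rw [hij, inner_zero_left]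
  rw [inner_add_left, real_inner_smul_left, real_inner_smul_left] at hα hβ
  rw [inner_coroot_self h.ne_zero₁, h.inner₂₁] at hα
  rw [inner_coroot_self h.ne_zero₂, h.inner₁₂] at hβ
  have hAB' : (4 - A * B : ℝ) ≠ 0 := sub_ne_zero.2 (by exact_mod_cast hAB.ne')
  refine (mul_eq_zero_iff_right hAB').1 ?_
  linear_combination 2 * hα + B * hβ

theorem corootReflection_mul_apply (h : IsCartanPair α β A B) (v : V) :
    (corootReflection α * corootReflection β) v
      = v - (⟪v, coroot α⟫ + B * ⟪v, coroot β⟫) • α - ⟪v, coroot β⟫ • β := by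
  simp only [LinearEquiv.mul_apply, corootReflection_apply, inner_sub_left, real_inner_smul_left,
    h.inner₂₁]
  module

theorem orderOf_corootReflection_mul (h : IsCartanPair α β A B) (hN : RankTwoType A B N) :
    orderOf (corootReflection α * corootReflection β) = N := by
  have : IsAddTorsionFree (Module.End ℝ V) := .of_isTorsionFree ℝ _
  rw [← orderOf_injective LinearEquiv.automorphismGroup.toLinearMapMonoidHom
    LinearEquiv.toLinearMap_injective]
  have hρ (v : V) : LinearEquiv.automorphismGroup.toLinearMapMonoidHom
      (corootReflection α * corootReflection β) v
      = v - (⟪v, coroot α⟫ + B * ⟪v, coroot β⟫) • α - ⟪v, coroot β⟫ • β :=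
    h.corootReflection_mul_apply v
  generalize LinearEquiv.automorphismGroup.toLinearMapMonoidHom
    (corootReflection α * corootReflection β) = ρ at hρ ⊢
  refine hN.orderOf_eq ?_ ?_ ?_
  · ext v
    simp only [pow_two, Nat.cast_mul, Module.End.mul_apply, LinearMap.sub_apply, hρ,
      Module.End.one_apply, LinearMap.add_apply, inner_sub_left, real_inner_smul_left,
      inner_coroot_self h.ne_zero₁, inner_coroot_self h.ne_zero₂, h.inner₂₁, h.inner₁₂,
      Module.End.natCast_apply, map_nsmul, Module.End.ofNat_apply, LinearMap.zero_apply]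
    module
  · intro hA
    ext v
    obtain rfl := hA
    obtain rfl := h.eq_zero_iff.1 rfl
    simp only [pow_two, Module.End.mul_apply, hρ, CharP.cast_eq_zero, inner_sub_left,
      real_inner_smul_left, inner_coroot_self h.ne_zero₁, inner_coroot_self h.ne_zero₂, h.inner₂₁,
      h.inner₁₂, Module.End.one_apply]
    module
  · rintro rfl
    have hβ := hρ β
    rw [Module.End.one_apply, h.inner₂₁, inner_coroot_self h.ne_zero₂] at hβ
    refine two_ne_zero (h.symm.eq_zero_of_smul_add_smul_eq_zero (α := β) (i := 2) (j := B) ?_ ?_)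
    · exact mul_comm A B ▸ hN.mul_lt_four
    · rw [← sub_eq_zero] at hβ
      rw [← hβ]
      module

theorem exists_aval_eq_zero {a b : V × ℤ} (h : IsCartanPair a.1 b.1 A B) (hAB : A * B < 4) (c : ℝ) :
    ∃ x₀, aval c a x₀ = 0 ∧ aval c b x₀ = 0 := by
  have hAB' : (4 - A * B : ℝ) ≠ 0 := sub_ne_zero.2 (by exact_mod_cast hAB.ne')
  refine ⟨-(c / (4 - A * B)) • ((2 * a.2 + B * b.2 : ℝ) • a.1 + (A * a.2 + 2 * b.2 : ℝ) • b.1),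
    ?_, ?_⟩ <;>
  · simp only [aval, inner_add_left, real_inner_smul_left, inner_coroot_self h.ne_zero₁,
      inner_coroot_self h.ne_zero₂, h.inner₁₂, h.inner₂₁]
    field_simp
    ring

end IsCartanPair

end CartanPair

section Braid

variable {V F : Type*} [NormedAddCommGroup V] [InnerProductSpace ℝ V] [Field F]
  {α β : V} {A B N : ℕ} {c : ℝ} {τ : V × ℤ → F} {a b : V × ℤ} {f : V → F} {P : Set V}

theorem IsCartanPair.isReflectionPair (h : IsCartanPair α β A B) (hAB : A * B < 4) :
    IsReflectionPair (reflectionAut F α : ExpField F V →ₐ[F] ExpField F V)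
      (reflectionAut F β : ExpField F V →ₐ[F] ExpField F V) (fexp F α) (fexp F β) A B where
  involutive₁ := reflectionAut_involutive α
  involutive₂ := reflectionAut_involutive β
  ne_zero₁ := fexp_ne_zero F α
  ne_zero₂ := fexp_ne_zero F β
  map₁_X := reflectionAut_fexp_self h.ne_zero₁
  map₁_Y := by
    rw [AlgEquiv.coe_toAlgHom, reflectionAut_fexp, h.inner₂₁, ← fexp_nsmul, ← fexp_add]
    congr 1
    module
  map₂_X := by
    rw [AlgEquiv.coe_toAlgHom, reflectionAut_fexp, h.inner₁₂, ← fexp_nsmul, ← fexp_add]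
    congr 1
    module
  map₂_Y := reflectionAut_fexp_self h.ne_zero₂
  monomial_ne_one i j hij h₁ := by
    rw [← fexp_nsmul, ← fexp_nsmul, ← fexp_add, ← fexp_zero F] at h₁
    have h₀ : (i : ℝ) • α + (j : ℝ) • β = 0 := by
      simpa only [Nat.cast_smul_eq_nsmul] using fexp_injective F h₁
    have hi := h.eq_zero_of_smul_add_smul_eq_zero hAB h₀
    have hj := h.symm.eq_zero_of_smul_add_smul_eq_zero (mul_comm A B ▸ hAB)
      (add_comm ((i : ℝ) • α) _ ▸ h₀)
    exact hij (Prod.ext (Nat.cast_eq_zero.1 hi) (Nat.cast_eq_zero.1 hj))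

theorem IsCartanPair.altProd_reflectionAut_comm (h : IsCartanPair α β A B)
    (hN : RankTwoType A B N) :
    altProd (reflectionAut F α) (reflectionAut F β) N
      = altProd (reflectionAut F β) (reflectionAut F α) N := by
  refine altProd_comm_of_pow_eq_one (reflectionAut_mul_self α) (reflectionAut_mul_self β) ?_
  rw [reflectionAut, reflectionAut, ← map_mul, ← map_pow, ← h.orderOf_corootReflection_mul hN,
    pow_orderOf_eq_one, map_one]

theorem IsCartanPair.altProd_rootOp_comm (h : IsCartanPair α β A B) (hN : RankTwoType A B N)
    {t₁ t₂ : F} (ht₁ : t₁ ≠ 0) (ht₂ : t₂ ≠ 0) (ht : A = 1 → B = 1 → t₁ = t₂) :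
    altProd (rootOp t₁ α) (rootOp t₂ β) N = altProd (rootOp t₂ β) (rootOp t₁ α) N := by
  refine (h.isReflectionPair hN.mul_lt_four).braid hN ht₁ ht₂ ht ?_
  have hs := congrArg (AlgEquiv.toLinearMapHom F (ExpField F V)) (h.altProd_reflectionAut_comm hN)
  rwa [map_altProd, map_altProd] at hs

theorem iterate_sAff_comp_add {x₀ : V} (ha : aval c a x₀ = 0) (hb : aval c b x₀ = 0) (m : ℕ)
    (v : V) :
    (fun x => sAff c a (sAff c b x))^[m] (x₀ + v)
      = x₀ + ((corootReflection a.1 * corootReflection b.1) ^ m) v := by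
  have hstep (d : V × ℤ) (hd : aval c d x₀ = 0) (v : V) :
      sAff c d (x₀ + v) = x₀ + corootReflection d.1 v := by
    rw [sAff, aval_add, hd, zero_add, corootReflection_apply, add_sub_assoc]
  induction m generalizing v with
  | zero => rfl
  | succ m ih => rw [Function.iterate_succ_apply, hstep b hb, hstep a ha, ih, pow_succ]; rfl

theorem iterate_sAff_comp_eq_id_iff {x₀ : V} (ha : aval c a x₀ = 0) (hb : aval c b x₀ = 0)
    (m : ℕ) :
    (fun x => sAff c a (sAff c b x))^[m] = id
      ↔ (corootReflection a.1 * corootReflection b.1) ^ m = 1 := by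
  rw [funext_iff, (Equiv.addLeft x₀).surjective.forall]
  simp only [Equiv.coe_addLeft, iterate_sAff_comp_add ha hb, id, add_right_inj, LinearEquiv.ext_iff,
    LinearEquiv.coe_one]

theorem altComp_Iop_comm (hPa : IsIntegralOn c a P) (hPb : IsIntegralOn c b P)
    (h : IsCartanPair a.1 b.1 A B) (hdep : ∀ t : ℝ, b.1 ≠ t • a.1)
    (hτa : τ a ≠ 0) (hτb : τ b ≠ 0) (hτ : A = 1 → B = 1 → τ a = τ b) {m : ℕ} (hm : 0 < m)
    (hid : (fun x => sAff c a (sAff c b x))^[m] = id)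
    (hmin : ∀ m', 0 < m' → m' < m → (fun x => sAff c a (sAff c b x))^[m'] ≠ id) (f : V → F)
    {x : V} (hx : x ∈ P) :
    altComp (Iop c τ a) (Iop c τ b) m f x = altComp (Iop c τ b) (Iop c τ a) m f x := by
  have hAB := h.mul_lt_four hdep
  obtain ⟨N, hN⟩ := RankTwoType.exists_of_mul_lt_four hAB h.eq_zero_iff
  obtain ⟨x₀, ha₀, hb₀⟩ := h.exists_aval_eq_zero hAB c
  obtain ⟨S, hS⟩ := exists_linearMap_fexp_sub F f x₀
  obtain rfl : N = m := by
    simp only [ne_eq, iterate_sAff_comp_eq_id_iff ha₀ hb₀] at hid hmin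
    rw [← h.orderOf_corootReflection_mul hN, orderOf_eq_iff hm]
    exact ⟨hid, fun m' hlt hpos => hmin m' hpos hlt⟩
  have hf : Represents P x₀ f S := fun y _ => (hS y).symm
  rw [hf.altComp_iop hPa hPb h.ne_zero₁ h.ne_zero₂ ha₀ hb₀ N x hx,
    hf.altComp_iop hPb hPa h.ne_zero₂ h.ne_zero₁ hb₀ ha₀ N x hx,
    h.altProd_rootOp_comm hN hτa hτb hτ]

end Braid

section AffineRoots

variable {V F : Type*} [NormedAddCommGroup V] [InnerProductSpace ℝ V] [Field F]
  {c : ℝ} {a b : V × ℤ}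

theorem inner_coroot_nonpos_iff {α β : V} (hβ : β ≠ 0) : ⟪α, coroot β⟫ ≤ 0 ↔ ⟪α, β⟫ ≤ 0 := by
  rw [coroot, real_inner_smul_right]
  exact smul_nonpos_iff_nonpos_of_pos_left (div_pos two_pos (real_inner_self_pos.2 hβ))

theorem aval_sAff (x : V) :
    aval c a (sAff c b x) = aval c a x - aval c b x * ⟪b.1, coroot a.1⟫ := by
  rw [sAff, sub_eq_add_neg, aval_add, inner_neg_left, real_inner_smul_left, sub_eq_add_neg]

theorem iterate_sAff_comp_ne_id (hb : b.1 ≠ 0) (hab : a.1 = -b.1) (hc : (a.2 + b.2) * c ≠ 0)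
    {m : ℕ} (hm : m ≠ 0) : (fun x => sAff c a (sAff c b x))^[m] ≠ id := by
  have htranslation : (fun x => sAff c a (sAff c b x)) = (· + ((a.2 + b.2) * c) • b.1) := by
    funext x
    rw [sAff, aval_sAff, sAff, hab, coroot_neg, inner_neg_right, inner_coroot_self hb, aval, aval,
      hab, coroot_neg, inner_neg_right]
    module
  rw [htranslation, add_right_iterate]
  intro h
  have h₀ := congrFun h 0
  rw [zero_add, id] at h₀
  rw [← Nat.cast_smul_eq_nsmul ℝ] at h₀
  exact smul_ne_zero (Nat.cast_ne_zero.2 hm) (smul_ne_zero hc hb) h₀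

theorem affineIsometryEquiv_add (g : V ≃ᵃⁱ[ℝ] V) (x v : V) :
    g (x + v) = g x + g.linearIsometryEquiv v := by
  rw [add_comm, add_comm (g x)]
  exact g.map_vadd x v

theorem affineIsometryEquiv_sub (g : V ≃ᵃⁱ[ℝ] V) (x v : V) :
    g (x - v) = g x - g.linearIsometryEquiv v := by
  rw [sub_eq_add_neg, affineIsometryEquiv_add, map_neg, sub_eq_add_neg]

theorem gradient_eq_of_aval_comp (g : V ≃ᵃⁱ[ℝ] V) (h : ∀ x, aval c b (g x) = aval c a x) :
    g.linearIsometryEquiv a.1 = b.1 := by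
  have hcoroot : g.linearIsometryEquiv (coroot a.1) = coroot b.1 := by
    refine ext_inner_left ℝ (g.linearIsometryEquiv.surjective.forall.2 fun y => ?_)
    have hy := h (0 + y)
    rw [affineIsometryEquiv_add, aval_add, aval_add, h] at hy
    rw [LinearIsometryEquiv.inner_map_map, add_left_cancel hy]
  rw [← coroot_coroot a.1, map_coroot, hcoroot, coroot_coroot]

theorem Iop_comp_isometry {τ : V × ℤ → F} (hτ : τ a = τ b) (g : V ≃ᵃⁱ[ℝ] V)
    (h : ∀ x, aval c b (g x) = aval c a x) (f : V → F) (x : V) :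
    Iop c τ a (fun y => f (g y)) x = Iop c τ b f (g x) := by
  simp only [Iop, Jop, sAff, affineIsometryEquiv_add, affineIsometryEquiv_sub, map_smul, map_zsmul,
    gradient_eq_of_aval_comp g h, h, hτ]

end AffineRoots

namespace RootSystemData

variable {V : Type*} [NormedAddCommGroup V] [InnerProductSpace ℝ V] (D : RootSystemData V)

variable {D} in
theorem neg_mem_R0 {α : V} (h : α ∈ D.R0) : -α ∈ D.R0 := by
  have hneg : α - ⟪α, coroot α⟫ • α = -α := by
    rw [inner_coroot_self (D.ne_zero α h)]
    module
  exact hneg ▸ D.reflect_mem α h α h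

theorem aSimple_zero : D.aSimple 0 = (-D.hshort, 1) := rfl

theorem aSimple_succ (i : Fin D.n) : D.aSimple i.succ = (D.simpleRoot i, 0) := rfl

theorem isAffRoot_aSimple (j : Fin (D.n + 1)) : D.IsAffRoot (D.aSimple j) := by
  cases j using Fin.cases with
  | zero => exact neg_mem_R0 (D.pos_subset D.hshort_mem)
  | succ i => exact D.pos_subset (D.simpleRoot_mem i)

theorem isIntegralOn_weightLattice (cz : ℤ) {a : V × ℤ} (ha : D.IsAffRoot a) :
    IsIntegralOn (cz : ℝ) a D.weightLattice := by
  intro x hx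
  constructor
  · obtain ⟨k, hk⟩ := hx a.1 ha
    exact ⟨k + a.2 * cz, by rw [aval, hk]; push_cast; rfl⟩
  · intro k β hβ
    obtain ⟨p, hp⟩ := hx β hβ
    obtain ⟨q, hq⟩ := D.crystallographic β hβ a.1 ha
    refine ⟨p + k * q, ?_⟩
    rw [inner_add_left, ← Int.cast_smul_eq_zsmul ℝ, real_inner_smul_left, hp, hq]
    push_cast
    rfl

theorem top_le_span_simpleRoot : ⊤ ≤ Submodule.span ℝ (Set.range D.simpleRoot) := by
  have hpos (α : V) (hα : α ∈ D.pos) : α ∈ Submodule.span ℝ (Set.range D.simpleRoot) := by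
    obtain ⟨k, rfl⟩ := D.pos_natCombo α hα
    exact Submodule.sum_mem _ fun j _ =>
      Submodule.smul_mem _ _ (Submodule.subset_span (Set.mem_range_self j))
  rw [← D.span_top, Submodule.span_le]
  intro α hα
  rcases D.pos_or_neg α hα with h | h
  · exact hpos α h
  · exact (Submodule.neg_mem_iff _).1 (hpos _ h)

/-- The simple roots as a basis of `V`, used to read off the coordinates of a root. -/
def simpleBasis : Module.Basis (Fin D.n) ℝ V :=
  basisOfTopLeSpanOfCardEqFinrank D.simpleRoot D.top_le_span_simpleRoot
    (by rw [Fintype.card_fin, D.rank_eq])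

theorem simpleBasis_repr_simpleRoot (i : Fin D.n) :
    D.simpleBasis.repr (D.simpleRoot i) = Finsupp.single i 1 := by
  rw [← D.simpleBasis.repr_self i, simpleBasis, coe_basisOfTopLeSpanOfCardEqFinrank]

theorem simpleBasis_repr_natCombo (k : Fin D.n → ℕ) (i : Fin D.n) :
    D.simpleBasis.repr (∑ j, (k j : ℝ) • D.simpleRoot j) i = k i := by
  simp only [map_sum, map_smul, simpleBasis_repr_simpleRoot, Finsupp.smul_single,
    Finsupp.finsetSum_apply, smul_eq_mul, mul_one, Finsupp.single_apply, Finset.sum_ite_eq',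
    Finset.mem_univ, if_true]

theorem simpleBasis_repr_nonneg {α : V} (hα : α ∈ D.pos) (i : Fin D.n) :
    0 ≤ D.simpleBasis.repr α i := by
  obtain ⟨k, rfl⟩ := D.pos_natCombo α hα
  rw [simpleBasis_repr_natCombo]
  exact Nat.cast_nonneg _

theorem inner_simpleRoot_nonpos {i k : Fin D.n} (hik : i ≠ k) :
    ⟪D.simpleRoot i, D.simpleRoot k⟫ ≤ 0 := by
  have hk := D.pos_subset (D.simpleRoot_mem k)
  rw [← inner_coroot_nonpos_iff (D.ne_zero _ hk)]
  have hrepr (j : Fin D.n) : D.simpleBasis.repr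
      (D.simpleRoot i - ⟪D.simpleRoot i, coroot (D.simpleRoot k)⟫ • D.simpleRoot k) j
      = (if i = j then 1 else 0)
        - (if k = j then ⟪D.simpleRoot i, coroot (D.simpleRoot k)⟫ else 0) := by
    simp only [map_sub, map_smul, simpleBasis_repr_simpleRoot, Finsupp.smul_single, smul_eq_mul,
      mul_one, Finsupp.sub_apply, Finsupp.single_apply]
  rcases D.pos_or_neg _ (D.reflect_mem _ hk _ (D.pos_subset (D.simpleRoot_mem i))) with h | h
  · have hcoord := D.simpleBasis_repr_nonneg h k
    rw [hrepr, if_neg hik, if_pos rfl] at hcoord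
    linarith
  · have hcoord := D.simpleBasis_repr_nonneg h i
    rw [map_neg, Finsupp.neg_apply, hrepr, if_pos rfl, if_neg hik.symm] at hcoord
    norm_num at hcoord

theorem inner_hshort_simpleRoot_nonneg (k : Fin D.n) : 0 ≤ ⟪D.hshort, D.simpleRoot k⟫ := by
  have hk := D.pos_subset (D.simpleRoot_mem k)
  have hnorm : ‖D.hshort - ⟪D.hshort, coroot (D.simpleRoot k)⟫ • D.simpleRoot k‖ = ‖D.hshort‖ := by
    rw [← corootReflection_apply]
    exact LinearIsometryEquiv.norm_map _ _
  obtain ⟨m, hm⟩ := D.hshort_highest _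
    (D.reflect_mem _ hk _ (D.pos_subset D.hshort_mem)) hnorm
  have hcoord := D.simpleBasis_repr_natCombo m k
  rw [← hm, sub_sub_cancel, map_smul, simpleBasis_repr_simpleRoot, Finsupp.smul_apply,
    Finsupp.single_eq_same, smul_eq_mul, mul_one] at hcoord
  rw [← neg_nonpos, ← inner_neg_left, ← inner_coroot_nonpos_iff (D.ne_zero _ hk), inner_neg_left,
    hcoord, neg_nonpos]
  exact Nat.cast_nonneg _

theorem inner_aSimple_nonpos {j k : Fin (D.n + 1)} (hjk : j ≠ k) :
    ⟪(D.aSimple j).1, (D.aSimple k).1⟫ ≤ 0 := by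
  cases j using Fin.cases <;> cases k using Fin.cases
  · exact absurd rfl hjk
  · rw [aSimple_zero, aSimple_succ, inner_neg_left, neg_nonpos]
    exact D.inner_hshort_simpleRoot_nonneg _
  · rw [aSimple_zero, aSimple_succ, inner_neg_right, neg_nonpos, real_inner_comm]
    exact D.inner_hshort_simpleRoot_nonneg _
  · exact D.inner_simpleRoot_nonpos fun h => hjk (congrArg _ h)

variable {D} in
theorem exists_isCartanPair {α β : V} (hα : α ∈ D.R0) (hβ : β ∈ D.R0) (h : ⟪α, β⟫ ≤ 0) :
    ∃ A B, IsCartanPair α β A B := by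
  have hα₀ := D.ne_zero α hα
  have hβ₀ := D.ne_zero β hβ
  have hαβ := (inner_coroot_nonpos_iff hβ₀).2 h
  have hβα := (inner_coroot_nonpos_iff hα₀).2 (real_inner_comm α β ▸ h)
  obtain ⟨p, hp⟩ := D.crystallographic β hβ α hα
  obtain ⟨q, hq⟩ := D.crystallographic α hα β hβ
  rw [hp, Int.cast_nonpos] at hαβ
  rw [hq, Int.cast_nonpos] at hβα
  obtain ⟨A, rfl⟩ := Int.exists_eq_neg_ofNat hαβ
  obtain ⟨B, rfl⟩ := Int.exists_eq_neg_ofNat hβα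
  exact ⟨A, B, hα₀, hβ₀, by rw [hp]; push_cast; rfl, by rw [hq]; push_cast; rfl⟩

theorem aSimple_ne_smul_or_opposite {j k : Fin (D.n + 1)} (hjk : j ≠ k) :
    (∀ t : ℝ, (D.aSimple k).1 ≠ t • (D.aSimple j).1) ∨
      (D.aSimple j).1 = -(D.aSimple k).1 ∧ (D.aSimple j).2 + (D.aSimple k).2 ≠ 0 := by
  by_contra! ⟨⟨t, ht⟩, hopp⟩
  rcases D.reduced _ (D.isAffRoot_aSimple j) t (ht ▸ D.isAffRoot_aSimple k) with rfl | rfl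
  · have hpos := real_inner_self_pos.2 (D.ne_zero _ (D.isAffRoot_aSimple j))
    have hneg := D.inner_aSimple_nonpos hjk
    rw [ht, one_smul] at hneg
    exact hneg.not_gt hpos
  · have hneg : (D.aSimple j).1 = -(D.aSimple k).1 := by rw [ht]; module
    have hlevel := hopp hneg
    cases j using Fin.cases <;> cases k using Fin.cases
    · exact hjk rfl
    · exact one_ne_zero hlevel
    · exact one_ne_zero hlevel
    · simp only [aSimple_succ] at hneg
      exact D.pos_not_both _ (D.simpleRoot_mem _) (hneg ▸ D.simpleRoot_mem _)

variable {D} {c : ℝ}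

theorem exists_isometry_of_mem_Wext {u : Equiv.Perm V} (hu : u ∈ D.Wext c) :
    ∃ g : V ≃ᵃⁱ[ℝ] V, g.toEquiv = u := by
  induction hu using Subgroup.closure_induction with
  | mem u hu =>
    rcases hu with ⟨a, -, hu⟩ | ⟨v, -, hu⟩
    · exact ⟨affineReflection c a, Equiv.ext fun x => (hu x).symm⟩
    · exact ⟨.constVAdd ℝ V (c • v), Equiv.ext fun x => (add_comm _ _).trans (hu x).symm⟩
  | one => exact ⟨1, rfl⟩
  | mul u v _ _ hu hv =>
    obtain ⟨g, rfl⟩ := hu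
    obtain ⟨h, rfl⟩ := hv
    exact ⟨g * h, rfl⟩
  | inv u _ hu =>
    obtain ⟨g, rfl⟩ := hu
    exact ⟨g⁻¹, rfl⟩

theorem apply_inv_apply_sub {u : Equiv.Perm V} (hu : u ∈ D.Wext c) (x v : V) :
    u (u⁻¹ x - v) = x - linPart u v := by
  obtain ⟨g, rfl⟩ := exists_isometry_of_mem_Wext hu
  obtain ⟨y, rfl⟩ := g.surjective x
  have hinv : g.toEquiv⁻¹ (g y) = y := g.symm_apply_apply y
  have hlin : linPart g.toEquiv v = g.linearIsometryEquiv v := by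
    have h := affineIsometryEquiv_add g 0 v
    rw [zero_add] at h
    exact sub_eq_of_eq_add' h
  rw [hinv, hlin]
  exact affineIsometryEquiv_sub g y v

variable {F : Type*} [Field F] {τ : V × ℤ → F} {a b : V × ℤ}

theorem Iop_comp_of_mapsRoot (hτ : D.IsMultiplicity c τ) {u : Equiv.Perm V} (hu : u ∈ D.Wext c)
    (ha : D.IsAffRoot a) (hb : D.IsAffRoot b) (h : mapsRoot c u a b) (f : V → F) (x : V) :
    Iop c τ a (fun y => f (u y)) (u⁻¹ x) = Iop c τ b f x := by
  have hτab := hτ.2 u hu a b ha hb h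
  obtain ⟨g, rfl⟩ := exists_isometry_of_mem_Wext hu
  obtain ⟨y, rfl⟩ := g.surjective x
  have hg (z : V) : g.toEquiv⁻¹ (g z) = z := g.symm_apply_apply z
  rw [hg]
  exact Iop_comp_isometry hτab g (fun z => by rw [← h, hg]) f y

theorem affineReflection_mem_Wext (c : ℝ) (ha : D.IsAffRoot a) :
    (affineReflection c a).toEquiv ∈ D.Wext c :=
  Subgroup.subset_closure (Or.inl ⟨a, ha, fun _ => rfl⟩)

theorem IsMultiplicity.eq_of_inner_coroot_eq_neg_one (hτ : D.IsMultiplicity c τ)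
    (ha : D.IsAffRoot a) (hb : D.IsAffRoot b) (hab : ⟪a.1, coroot b.1⟫ = -1)
    (hba : ⟪b.1, coroot a.1⟫ = -1) : τ a = τ b := by
  have hmem := mul_mem (affineReflection_mem_Wext c hb) (affineReflection_mem_Wext c ha)
  refine hτ.2 _ (inv_mem hmem) a b ha hb fun x => ?_
  rw [inv_inv]
  change aval c a (sAff c b (sAff c a x)) = aval c b x
  rw [aval_sAff, aval_sAff, aval_sAff, hab, hba, inner_coroot_self (D.ne_zero _ ha)]
  ring

theorem altComp_Iop_aSimple_comm {cz : ℤ} (hc : cz ≠ 0) (hτ : D.IsMultiplicity (cz : ℝ) τ)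
    {j k : Fin (D.n + 1)} (hjk : j ≠ k) {m : ℕ} (hm : 0 < m)
    (hid : (fun x => sAff (cz : ℝ) (D.aSimple j) (sAff (cz : ℝ) (D.aSimple k) x))^[m] = id)
    (hmin : ∀ m', 0 < m' → m' < m →
      (fun x => sAff (cz : ℝ) (D.aSimple j) (sAff (cz : ℝ) (D.aSimple k) x))^[m'] ≠ id)
    (f : V → F) {x : V} (hx : x ∈ D.weightLattice) :
    altComp (Iop (cz : ℝ) τ (D.aSimple j)) (Iop (cz : ℝ) τ (D.aSimple k)) m f x
      = altComp (Iop (cz : ℝ) τ (D.aSimple k)) (Iop (cz : ℝ) τ (D.aSimple j)) m f x := by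
  have hj := D.isAffRoot_aSimple j
  have hk := D.isAffRoot_aSimple k
  rcases D.aSimple_ne_smul_or_opposite hjk with hdep | ⟨hopp, hlevel⟩
  · obtain ⟨A, B, h⟩ := exists_isCartanPair hj hk (D.inner_aSimple_nonpos hjk)
    refine altComp_Iop_comm (D.isIntegralOn_weightLattice cz hj)
      (D.isIntegralOn_weightLattice cz hk) h hdep (hτ.1 _ hj) (hτ.1 _ hk) ?_ hm hid hmin f hx
    rintro rfl rfl
    exact hτ.eq_of_inner_coroot_eq_neg_one hj hk (by simpa using h.inner₁₂)
      (by simpa using h.inner₂₁)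
  · refine absurd hid (iterate_sAff_comp_ne_id (D.ne_zero _ hk) hopp ?_ hm.ne')
    exact mul_ne_zero (by exact_mod_cast hlevel) (by exact_mod_cast hc)

end RootSystemData

open RootSystemData in
theorem statement2_general {V F : Type*} [NormedAddCommGroup V] [InnerProductSpace ℝ V] [Field F]
    (D : RootSystemData V) (cz : ℤ) (hc : cz ≠ 0)
    (τ : V × ℤ → F) (hτ : D.IsMultiplicity (cz : ℝ) τ) :
    (∀ a, D.IsAffRoot a → ∀ f : V → F, ∀ lam ∈ D.weightLattice,
      Iop (cz : ℝ) τ a (fun y => Iop (cz : ℝ) τ a f y + (τ a)⁻¹ * f y) lam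
        - τ a * (Iop (cz : ℝ) τ a f lam + (τ a)⁻¹ * f lam) = 0) ∧
    (∀ j k : Fin (D.n + 1), j ≠ k → ∀ m : ℕ, 0 < m →
      (fun x => sAff (cz : ℝ) (D.aSimple j) (sAff (cz : ℝ) (D.aSimple k) x))^[m] = id →
      (∀ m' : ℕ, 0 < m' → m' < m →
        (fun x => sAff (cz : ℝ) (D.aSimple j) (sAff (cz : ℝ) (D.aSimple k) x))^[m'] ≠ id) →
      ∀ f : V → F, ∀ lam ∈ D.weightLattice,
        altComp (Iop (cz : ℝ) τ (D.aSimple j)) (Iop (cz : ℝ) τ (D.aSimple k)) m f lam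
          = altComp (Iop (cz : ℝ) τ (D.aSimple k)) (Iop (cz : ℝ) τ (D.aSimple j)) m f lam) ∧
    (∀ u ∈ D.Wext (cz : ℝ),
      (∀ a b, D.IsAffRoot a → D.IsAffRoot b → mapsRoot (cz : ℝ) u a b → ∀ (f : V → F) (x : V),
        Iop (cz : ℝ) τ a (fun y => f (u y)) (u⁻¹ x) = Iop (cz : ℝ) τ b f x) ∧
      ∀ (lam : V) (f : V → F) (x : V), f (u (u⁻¹ x - lam)) = f (x - linPart u lam)) ∧
    (∀ (lam mu : V) (f : V → F) (x : V), f (x - lam - mu) = f (x - (lam + mu))) ∧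
    (∀ a, D.IsAffRoot a → ∀ ν ∈ D.weightLattice, ∀ f : V → F, ∀ lam ∈ D.weightLattice,
      Iop (cz : ℝ) τ a (fun y => f (y - ν)) lam
        = Iop (cz : ℝ) τ a f (lam - (ν - ⟪ν, coroot a.1⟫ • a.1))
          + (τ a - (τ a)⁻¹) * signedSum (fun k => f (lam - ν + k • a.1)) ⌊⟪ν, coroot a.1⟫⌋) := by
  refine ⟨fun a ha f x hx => ?_, fun j k hjk m hm hid hmin f x hx =>
      altComp_Iop_aSimple_comm hc hτ hjk hm hid hmin f hx,
    fun u hu => ⟨fun a b ha hb h => Iop_comp_of_mapsRoot hτ hu ha hb h,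
      fun v f x => congrArg f (apply_inv_apply_sub hu x v)⟩,
    fun v w f x => congrArg f (sub_sub x v w), fun a ha ν hν f x hx => ?_⟩
  · obtain ⟨⟨p, hp⟩, -⟩ := D.isIntegralOn_weightLattice cz ha x hx
    exact sub_eq_zero.2 (Iop_quadratic (hτ.1 a ha) (D.ne_zero _ ha) f hp)
  · obtain ⟨⟨p, hp⟩, -⟩ := D.isIntegralOn_weightLattice cz ha x hx
    obtain ⟨n, hn⟩ := hν a.1 ha
    rw [hn, Int.floor_intCast, Int.cast_smul_eq_zsmul]
    exact Iop_translate τ (D.ne_zero _ ha) f hp hn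

/-- the integral-reflection operators `I_j`, the action of `Ω` and the
translations `t_λ` satisfy the defining relations of the double affine Hecke algebra
at critical level, as operators on functions over the weight lattice `P`. -/
theorem statement2 {V : Type*} [NormedAddCommGroup V] [InnerProductSpace ℝ V]
    (D : RootSystemData V) (cz : ℤ) (hc : 1 < cz)
    (τ : V × ℤ → ℂ) (hτ : D.IsMultiplicity (cz : ℝ) τ) :
    -- (i) quadratic relations (I_j - τ_j) ∘ (I_j + τ_j⁻¹) = 0
    (∀ j : Fin (D.n + 1), ∀ f : V → ℂ, ∀ lam ∈ D.weightLattice,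
      Iop (cz : ℝ) τ (D.aSimple j)
          (fun y => Iop (cz : ℝ) τ (D.aSimple j) f y + (τ (D.aSimple j))⁻¹ * f y) lam
        - τ (D.aSimple j) *
            (Iop (cz : ℝ) τ (D.aSimple j) f lam + (τ (D.aSimple j))⁻¹ * f lam) = 0) ∧
    -- (ii) braid relations, with m = the (finite) order of s_{a_j} s_{a_k} in W
    (∀ j k : Fin (D.n + 1), j ≠ k → ∀ m : ℕ, 0 < m →
      (fun x => sAff (cz : ℝ) (D.aSimple j) (sAff (cz : ℝ) (D.aSimple k) x))^[m] = id →
      (∀ m' : ℕ, 0 < m' → m' < m →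
        (fun x => sAff (cz : ℝ) (D.aSimple j) (sAff (cz : ℝ) (D.aSimple k) x))^[m'] ≠ id) →
      ∀ f : V → ℂ, ∀ lam ∈ D.weightLattice,
        altComp (Iop (cz : ℝ) τ (D.aSimple j)) (Iop (cz : ℝ) τ (D.aSimple k)) m f lam
          = altComp (Iop (cz : ℝ) τ (D.aSimple k)) (Iop (cz : ℝ) τ (D.aSimple j)) m f lam) ∧
    -- (iii) Ω-conjugation: u ∘ I_j ∘ u⁻¹ = I_{u_j} and u ∘ t_λ ∘ u⁻¹ = t_{u′λ}
    (∀ u : Equiv.Perm V, u ∈ D.Wext (cz : ℝ) → D.len (cz : ℝ) u = 0 →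
      (∀ j k : Fin (D.n + 1),
        (∀ x : V, aval (cz : ℝ) (D.aSimple j) (u⁻¹ x) = aval (cz : ℝ) (D.aSimple k) x) →
        ∀ f : V → ℂ, ∀ lam ∈ D.weightLattice,
          Iop (cz : ℝ) τ (D.aSimple j) (fun y => f (u y)) (u⁻¹ lam)
            = Iop (cz : ℝ) τ (D.aSimple k) f lam) ∧
      (∀ lam ∈ D.weightLattice, ∀ f : V → ℂ, ∀ x ∈ D.weightLattice,
        f (u (u⁻¹ x - lam)) = f (x - linPart u lam))) ∧
    -- (iv) t_λ ∘ t_μ = t_{λ+μ}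
    (∀ lam ∈ D.weightLattice, ∀ mu ∈ D.weightLattice, ∀ f : V → ℂ,
      ∀ x ∈ D.weightLattice, f (x - lam - mu) = f (x - (lam + mu))) ∧
    -- (v) cross relation I_j ∘ t_ν = t_{s_j′ν} ∘ I_j + (τ_j - τ_j⁻¹) G_{j,ν}
    (∀ j : Fin (D.n + 1), ∀ ν ∈ D.Ptheta, ∀ f : V → ℂ, ∀ lam ∈ D.weightLattice,
      Iop (cz : ℝ) τ (D.aSimple j) (fun y => f (y - ν)) lam
        = Iop (cz : ℝ) τ (D.aSimple j) f
            (lam - (ν - ⟪ν, coroot (D.aSimple j).1⟫ • (D.aSimple j).1))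
          + (τ (D.aSimple j) - (τ (D.aSimple j))⁻¹) * Gop D (cz : ℝ) j ν f lam) := by
  obtain ⟨hquadratic, hbraid, hOmega, htranslation, hcross⟩ :=
    statement2_general D cz (by omega) τ hτ
  refine ⟨fun j => hquadratic _ (D.isAffRoot_aSimple j), hbraid,
    fun u hu _ => ⟨fun j k h f x _ => (hOmega u hu).1 _ _ (D.isAffRoot_aSimple j)
      (D.isAffRoot_aSimple k) h f x, fun v _ f x _ => (hOmega u hu).2 v f x⟩,
    fun v _ w _ f x _ => htranslation v w f x, fun j ν hν f x hx => ?_⟩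
  rw [Gop_eq_signedSum]
  exact hcross _ (D.isAffRoot_aSimple j) ν hν.1 f x hx
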